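/- arXiv:2001.09688 — 5 statements merged into one kernel-verified Lean document; each statement's English description precedes it below -/
import Mathlib

section
/- There exist m, n, a real n×m matrix K of maximal rank, pairwise distinct reals p1, p2, p3, q1, q2, q3 with p_i ≠ q_j for all i, j, and rank-one K-projections X1, X2, X3 such that all trace denominators occurring below are nonzero and T_{12}(1,2) ∘ T_{13}(1,3) ∘ T_{23}(2,3) applied to (X1,X2,X3) differs from T_{23}(2,3) ∘ T_{13}(1,3) ∘ T_{12}(1,2) applied to (X1,X2,X3); that is, the map T is not a Yang–Baxter map. -/
open Matrix

/-- The space of real `m × n` matrices. -/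
abbrev Mat (m n : ℕ) := Matrix (Fin m) (Fin n) ℝ

/-- `X` is a rank-one `K`-projection, i.e. `X ∈ S`. -/
def InS {m n : ℕ} (K : Matrix (Fin n) (Fin m) ℝ) (X : Mat m n) : Prop :=
  X * K * X = X ∧ X.rank = 1

/-- `A(p,q,λ,X) = 1ₘ − ((p−q)/(λ−q)) X K`. -/
noncomputable def Amat {m n : ℕ} (K : Matrix (Fin n) (Fin m) ℝ) (p q lam : ℝ) (X : Mat m n) :
    Matrix (Fin m) (Fin m) ℝ :=
  1 - ((p - q) / (lam - q)) • (X * K)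

/-- `Ã(p,q,λ,X) = 1ₙ − ((p−q)/(λ−q)) K X`. -/
noncomputable def Atil {m n : ℕ} (K : Matrix (Fin n) (Fin m) ℝ) (p q lam : ℝ) (X : Mat m n) :
    Matrix (Fin n) (Fin n) ℝ :=
  1 - ((p - q) / (lam - q)) • (K * X)

/-- `B(p,q,λ,X) = 1ₘ + ((p−q)/(λ−p)) X K`. -/
noncomputable def Bmat {m n : ℕ} (K : Matrix (Fin n) (Fin m) ℝ) (p q lam : ℝ) (X : Mat m n) :
    Matrix (Fin m) (Fin m) ℝ :=
  1 + ((p - q) / (lam - p)) • (X * K)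

/-- `B̃(p,q,λ,X) = 1ₙ + ((p−q)/(λ−p)) K X`. -/
noncomputable def Btil {m n : ℕ} (K : Matrix (Fin n) (Fin m) ℝ) (p q lam : ℝ) (X : Mat m n) :
    Matrix (Fin n) (Fin n) ℝ :=
  1 + ((p - q) / (lam - p)) • (K * X)

/-- `α₁₂⁻¹ = 1 − ((p1−q1)(p2−q2))/((p2−p1)(q2−q1)) · tr(K X1 K X2)`. -/
noncomputable def adenom {m n : ℕ} (K : Matrix (Fin n) (Fin m) ℝ) (p1 q1 p2 q2 : ℝ)
    (X1 X2 : Mat m n) : ℝ :=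
  1 - (p1 - q1) * (p2 - q2) / ((p2 - p1) * (q2 - q1)) * (K * X1 * K * X2).trace

/-- The Yang–Baxter map `R(p1,q1;p2,q2)`. -/
noncomputable def Rmap {m n : ℕ} (K : Matrix (Fin n) (Fin m) ℝ) (p1 q1 p2 q2 : ℝ)
    (X : Mat m n × Mat m n) : Mat m n × Mat m n :=
  ((adenom K p1 q1 p2 q2 X.1 X.2)⁻¹ •
      ((1 - ((p2 - q2) / (p2 - p1)) • (X.2 * K)) * X.1 *
        (1 - ((p2 - q2) / (q1 - q2)) • (K * X.2))),
   (adenom K p1 q1 p2 q2 X.1 X.2)⁻¹ •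
      ((1 - ((p1 - q1) / (q2 - q1)) • (X.1 * K)) * X.2 *
        (1 - ((p1 - q1) / (p1 - p2)) • (K * X.1))))

/-- Trace denominator of the first component of the map `T`:
`tr[A₂(p1,X2) X1 B̃₂(q1,X2) K]`. -/
noncomputable def Tden1 {m n : ℕ} (K : Matrix (Fin n) (Fin m) ℝ) (p1 q1 p2 q2 : ℝ)
    (X1 X2 : Mat m n) : ℝ :=
  (Amat K p2 q2 p1 X2 * X1 * Btil K p2 q2 q1 X2 * K).trace

/-- Trace denominator of the second component of the map `T`:
`tr[A₁(p2,X1) X2 B̃₁(q2,X1) K]`. -/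
noncomputable def Tden2 {m n : ℕ} (K : Matrix (Fin n) (Fin m) ℝ) (p1 q1 p2 q2 : ℝ)
    (X1 X2 : Mat m n) : ℝ :=
  (Amat K p1 q1 p2 X1 * X2 * Btil K p1 q1 q2 X1 * K).trace

/-- The (non-Yang–Baxter) map `T(p1,q1;p2,q2)`. -/
noncomputable def Tmap {m n : ℕ} (K : Matrix (Fin n) (Fin m) ℝ) (p1 q1 p2 q2 : ℝ)
    (X : Mat m n × Mat m n) : Mat m n × Mat m n :=
  ((Tden1 K p1 q1 p2 q2 X.1 X.2)⁻¹ • (Amat K p2 q2 p1 X.2 * X.1 * Btil K p2 q2 q1 X.2),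
   (Tden2 K p1 q1 p2 q2 X.1 X.2)⁻¹ • (Amat K p1 q1 p2 X.1 * X.2 * Btil K p1 q1 q2 X.1))

/-- Trace denominator of the first component of `T⁻¹`: `tr[B₂(q1,X2) X1 Ã₂(p1,X2) K]`. -/
noncomputable def Tinvden1 {m n : ℕ} (K : Matrix (Fin n) (Fin m) ℝ) (p1 q1 p2 q2 : ℝ)
    (X1 X2 : Mat m n) : ℝ :=
  (Bmat K p2 q2 q1 X2 * X1 * Atil K p2 q2 p1 X2 * K).trace

/-- Trace denominator of the second component of `T⁻¹`: `tr[B₁(q2,X1) X2 Ã₁(p2,X1) K]`. -/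
noncomputable def Tinvden2 {m n : ℕ} (K : Matrix (Fin n) (Fin m) ℝ) (p1 q1 p2 q2 : ℝ)
    (X1 X2 : Mat m n) : ℝ :=
  (Bmat K p1 q1 q2 X1 * X2 * Atil K p1 q1 p2 X1 * K).trace

/-- The map `Tinv(p1,q1;p2,q2)`, the inverse of `T(p1,q1;p2,q2)`. -/
noncomputable def Tinvmap {m n : ℕ} (K : Matrix (Fin n) (Fin m) ℝ) (p1 q1 p2 q2 : ℝ)
    (X : Mat m n × Mat m n) : Mat m n × Mat m n :=
  ((Tinvden1 K p1 q1 p2 q2 X.1 X.2)⁻¹ • (Bmat K p2 q2 q1 X.2 * X.1 * Atil K p2 q2 p1 X.2),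
   (Tinvden2 K p1 q1 p2 q2 X.1 X.2)⁻¹ • (Bmat K p1 q1 q2 X.1 * X.2 * Atil K p1 q1 p2 X.1))

/-- Trace denominator of the first component of `R⁻¹`: `tr[A₂(q1,X2) X1 B̃₂(p1,X2) K]`. -/
noncomputable def Rinvden1 {m n : ℕ} (K : Matrix (Fin n) (Fin m) ℝ) (p1 q1 p2 q2 : ℝ)
    (X1 X2 : Mat m n) : ℝ :=
  (Amat K p2 q2 q1 X2 * X1 * Btil K p2 q2 p1 X2 * K).trace

/-- Trace denominator of the second component of `R⁻¹`: `tr[B₁(p2,X1) X2 Ã₁(q2,X1) K]`. -/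
noncomputable def Rinvden2 {m n : ℕ} (K : Matrix (Fin n) (Fin m) ℝ) (p1 q1 p2 q2 : ℝ)
    (X1 X2 : Mat m n) : ℝ :=
  (Bmat K p1 q1 p2 X1 * X2 * Atil K p1 q1 q2 X1 * K).trace

/-- The map `Rinv(p1,q1;p2,q2)`, the inverse of `R(p1,q1;p2,q2)`. -/
noncomputable def Rinvmap {m n : ℕ} (K : Matrix (Fin n) (Fin m) ℝ) (p1 q1 p2 q2 : ℝ)
    (X : Mat m n × Mat m n) : Mat m n × Mat m n :=
  ((Rinvden1 K p1 q1 p2 q2 X.1 X.2)⁻¹ • (Amat K p2 q2 q1 X.2 * X.1 * Btil K p2 q2 p1 X.2),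
   (Rinvden2 K p1 q1 p2 q2 X.1 X.2)⁻¹ • (Bmat K p1 q1 p2 X.1 * X.2 * Atil K p1 q1 q2 X.1))

/-- `R` acting on components 1 and 2 of a triple. -/
noncomputable def R12t {m n : ℕ} (K : Matrix (Fin n) (Fin m) ℝ) (p1 q1 p2 q2 : ℝ)
    (X : Mat m n × Mat m n × Mat m n) : Mat m n × Mat m n × Mat m n :=
  ((Rmap K p1 q1 p2 q2 (X.1, X.2.1)).1, (Rmap K p1 q1 p2 q2 (X.1, X.2.1)).2, X.2.2)

/-- `R` acting on components 1 and 3 of a triple. -/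
noncomputable def R13t {m n : ℕ} (K : Matrix (Fin n) (Fin m) ℝ) (p1 q1 p3 q3 : ℝ)
    (X : Mat m n × Mat m n × Mat m n) : Mat m n × Mat m n × Mat m n :=
  ((Rmap K p1 q1 p3 q3 (X.1, X.2.2)).1, X.2.1, (Rmap K p1 q1 p3 q3 (X.1, X.2.2)).2)

/-- `R` acting on components 2 and 3 of a triple. -/
noncomputable def R23t {m n : ℕ} (K : Matrix (Fin n) (Fin m) ℝ) (p2 q2 p3 q3 : ℝ)
    (X : Mat m n × Mat m n × Mat m n) : Mat m n × Mat m n × Mat m n :=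
  (X.1, Rmap K p2 q2 p3 q3 (X.2.1, X.2.2))

/-- `T` acting on components 1 and 2 of a triple. -/
noncomputable def T12t {m n : ℕ} (K : Matrix (Fin n) (Fin m) ℝ) (p1 q1 p2 q2 : ℝ)
    (X : Mat m n × Mat m n × Mat m n) : Mat m n × Mat m n × Mat m n :=
  ((Tmap K p1 q1 p2 q2 (X.1, X.2.1)).1, (Tmap K p1 q1 p2 q2 (X.1, X.2.1)).2, X.2.2)

/-- `T` acting on components 1 and 3 of a triple. -/
noncomputable def T13t {m n : ℕ} (K : Matrix (Fin n) (Fin m) ℝ) (p1 q1 p3 q3 : ℝ)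
    (X : Mat m n × Mat m n × Mat m n) : Mat m n × Mat m n × Mat m n :=
  ((Tmap K p1 q1 p3 q3 (X.1, X.2.2)).1, X.2.1, (Tmap K p1 q1 p3 q3 (X.1, X.2.2)).2)

/-- `T` acting on components 2 and 3 of a triple. -/
noncomputable def T23t {m n : ℕ} (K : Matrix (Fin n) (Fin m) ℝ) (p2 q2 p3 q3 : ℝ)
    (X : Mat m n × Mat m n × Mat m n) : Mat m n × Mat m n × Mat m n :=
  (X.1, Tmap K p2 q2 p3 q3 (X.2.1, X.2.2))

/-- `T⁻¹` acting on components 2 and 3 of a triple. -/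
noncomputable def Tinv23t {m n : ℕ} (K : Matrix (Fin n) (Fin m) ℝ) (p2 q2 p3 q3 : ℝ)
    (X : Mat m n × Mat m n × Mat m n) : Mat m n × Mat m n × Mat m n :=
  (X.1, Tinvmap K p2 q2 p3 q3 (X.2.1, X.2.2))

/-- `R⁻¹` acting on components 2 and 3 of a triple. -/
noncomputable def Rinv23t {m n : ℕ} (K : Matrix (Fin n) (Fin m) ℝ) (p2 q2 p3 q3 : ℝ)
    (X : Mat m n × Mat m n × Mat m n) : Mat m n × Mat m n × Mat m n :=
  (X.1, Rinvmap K p2 q2 p3 q3 (X.2.1, X.2.2))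

/-!
For `m = 1` a rank-one `K`-projection is a left inverse of the column `K`, and the left inverses
form an affine space. There `A` acts by a scalar, the trace denominators of `T` are cross-ratios
of the parameters, and each component of `T` lies on the affine line through the two arguments.
Both sides of the Yang–Baxter relation are thus affine combinations of `X1, X2, X3`. Their third
components differ by a multiple of `X1 - X2`, whose coefficient vanishes only on the hyperplanes
`p1 = q1`, `p2 = q2` and `p2 + q2 = 2 q3`.
-/

section Rank

variable {R : Type*} [CommSemiring R] [StrongRankCondition R] {m n : ℕ}
  {X : Matrix (Fin m) (Fin n) R} {K : Matrix (Fin n) (Fin m) R}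

lemma rank_eq_of_mul_eq_one (h : X * K = 1) : X.rank = m :=
  le_antisymm X.rank_le_height (by simpa [h] using rank_mul_le_left X K)

lemma rank_eq_of_left_mul_eq_one (h : X * K = 1) : K.rank = m :=
  le_antisymm K.rank_le_width (by simpa [h] using rank_mul_le_right X K)

end Rank

lemma lineMap_mul_eq_one {R m n : Type*} [CommRing R] [Fintype n] [DecidableEq m]
    {X Y : Matrix m n R} {K : Matrix n m R} (hX : X * K = 1) (hY : Y * K = 1) (t : R) :
    AffineMap.lineMap X Y t * K = 1 := by
  simp [AffineMap.lineMap_apply_module, Matrix.add_mul, hX, hY, ← add_smul]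

-- The two terms on the left are the third components of the two sides of the Yang–Baxter relation.
lemma lineMap_lineMap_sub_lineMap_lineMap {k V : Type*} [Field k] [AddCommGroup V] [Module k V]
    {p₁ q₁ p₂ q₂ q₃ : k} (h₁₂ : q₁ ≠ q₂) (h₁₃ : q₁ ≠ q₃) (h₂₃ : q₂ ≠ q₃) (x y z : V) :
    AffineMap.lineMap (AffineMap.lineMap z y ((p₂ - q₂) / (q₃ - q₂))) x
          ((p₁ - q₁) / (q₃ - q₁)) -
        AffineMap.lineMap
          (AffineMap.lineMap z (AffineMap.lineMap x y ((p₂ - q₂) / (q₁ - q₂)))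
            ((p₁ - q₁) / (q₃ - q₁)))
          (AffineMap.lineMap y x ((p₁ - q₁) / (q₂ - q₁))) ((p₂ - q₂) / (q₃ - q₂)) =
      ((p₁ - q₁) * (p₂ - q₂) * (2 * q₃ - (p₂ + q₂)) /
        ((q₁ - q₂) * (q₃ - q₁) * (q₃ - q₂))) • (x - y) := by
  have h₁₂' := sub_ne_zero.mpr h₁₂
  have h₃₁' := sub_ne_zero.mpr h₁₃.symm
  have h₃₂' := sub_ne_zero.mpr h₂₃.symm
  -- `q₁ - q₂` and `q₂ - q₁` both occur as denominators; `field_simp` needs a single one.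
  have h₂₁ : q₂ - q₁ = -(q₁ - q₂) := (neg_sub _ _).symm
  rw [h₂₁]
  simp only [AffineMap.lineMap_apply_module]
  match_scalars <;> field_simp <;> ring

/-- The sets `{p1, q1}` and `{p2, q2}` are disjoint. On left inverses of a column this is exactly
what keeps `T(p1,q1;p2,q2)` free of division by zero. -/
structure DisjointParams (p1 q1 p2 q2 : ℝ) : Prop where
  p_ne_p : p1 ≠ p2
  p_ne_q : p1 ≠ q2
  q_ne_p : q1 ≠ p2
  q_ne_q : q1 ≠ q2

lemma DisjointParams.symm {p1 q1 p2 q2 : ℝ} (h : DisjointParams p1 q1 p2 q2) :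
    DisjointParams p2 q2 p1 q1 :=
  ⟨h.p_ne_p.symm, h.q_ne_p.symm, h.p_ne_q.symm, h.q_ne_q.symm⟩

section LeftInverse

variable {m n : ℕ} {K : Matrix (Fin n) (Fin m) ℝ} {X Y : Mat m n}

lemma Amat_eq_smul_one {p q lam : ℝ} (hX : X * K = 1) (hlam : lam ≠ q) :
    Amat K p q lam X = ((lam - p) / (lam - q)) • 1 := by
  have h : (lam - p) / (lam - q) = 1 - (p - q) / (lam - q) := by
    rw [one_sub_div (sub_ne_zero.mpr hlam), sub_sub_sub_cancel_right]
  rw [Amat, hX, h, sub_smul, one_smul]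

lemma mul_Btil_eq_smul_lineMap {p q mu : ℝ} (hX : X * K = 1) (hp : mu ≠ p) (hq : mu ≠ q) :
    X * Btil K p q mu Y =
      ((mu - q) / (mu - p)) • AffineMap.lineMap X Y ((p - q) / (mu - q)) := by
  have hp' := sub_ne_zero.mpr hp
  have hq' := sub_ne_zero.mpr hq
  have h : X * Btil K p q mu Y = X + ((p - q) / (mu - p)) • Y := by
    rw [Btil, Matrix.mul_add, Matrix.mul_one, Matrix.mul_smul, ← Matrix.mul_assoc, hX,
      Matrix.one_mul]
  rw [h, AffineMap.lineMap_apply_module]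
  match_scalars
  · field_simp
    ring
  · field_simp

lemma Amat_mul_mul_Btil {p1 q1 p2 q2 : ℝ} (hX : X * K = 1) (hY : Y * K = 1)
    (hpq : p1 ≠ q2) (hqp : q1 ≠ p2) (hqq : q1 ≠ q2) :
    Amat K p2 q2 p1 Y * X * Btil K p2 q2 q1 Y =
      ((p1 - p2) / (p1 - q2) * ((q1 - q2) / (q1 - p2))) •
        AffineMap.lineMap X Y ((p2 - q2) / (q1 - q2)) := by
  rw [Amat_eq_smul_one hY hpq, Matrix.smul_mul, Matrix.one_mul, Matrix.smul_mul,
    mul_Btil_eq_smul_lineMap hX hqp hqq, smul_smul]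

end LeftInverse

section Column

variable {n : ℕ} {K : Matrix (Fin n) (Fin 1) ℝ} {p1 q1 p2 q2 p3 q3 : ℝ} {X Y Z : Mat 1 n}

lemma inS_iff_mul_eq_one : InS K X ↔ X * K = 1 := by
  refine ⟨fun ⟨hXKX, hrank⟩ ↦ ?_, fun hX ↦ ⟨by rw [hX, Matrix.one_mul],
    rank_eq_of_mul_eq_one hX⟩⟩
  have hX0 : X ≠ 0 := by
    rintro rfl
    simp at hrank
  have hscalar : X * K = (X * K) 0 0 • 1 := by
    ext i j
    simp [Subsingleton.elim i 0, Subsingleton.elim j 0]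
  have hfix : (X * K) 0 0 • X = (1 : ℝ) • X := by
    rw [hscalar, Matrix.smul_mul, Matrix.one_mul] at hXKX
    rw [hXKX, one_smul]
  rw [hscalar, smul_left_injective ℝ hX0 hfix, one_smul]

lemma Tden1_eq (hX : X * K = 1) (hY : Y * K = 1) (hpq : p1 ≠ q2) (hqp : q1 ≠ p2)
    (hqq : q1 ≠ q2) :
    Tden1 K p1 q1 p2 q2 X Y = (p1 - p2) / (p1 - q2) * ((q1 - q2) / (q1 - p2)) := by
  rw [Tden1, Amat_mul_mul_Btil hX hY hpq hqp hqq, Matrix.smul_mul, lineMap_mul_eq_one hX hY,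
    trace_smul, trace_one, Fintype.card_fin, Nat.cast_one, smul_eq_mul, mul_one]

lemma Tden1_ne_zero (h : DisjointParams p1 q1 p2 q2) (hX : X * K = 1) (hY : Y * K = 1) :
    Tden1 K p1 q1 p2 q2 X Y ≠ 0 := by
  rw [Tden1_eq hX hY h.p_ne_q h.q_ne_p h.q_ne_q]
  exact mul_ne_zero (div_ne_zero (sub_ne_zero.mpr h.p_ne_p) (sub_ne_zero.mpr h.p_ne_q))
    (div_ne_zero (sub_ne_zero.mpr h.q_ne_q) (sub_ne_zero.mpr h.q_ne_p))

-- Exchanging the factors turns `Tden1` into `Tden2` and `Tmap.1` into `Tmap.2` by `rfl`.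
lemma Tden2_ne_zero (h : DisjointParams p1 q1 p2 q2) (hX : X * K = 1) (hY : Y * K = 1) :
    Tden2 K p1 q1 p2 q2 X Y ≠ 0 :=
  Tden1_ne_zero h.symm hY hX

lemma Tmap_fst (h : DisjointParams p1 q1 p2 q2) (hX : X * K = 1) (hY : Y * K = 1) :
    (Tmap K p1 q1 p2 q2 (X, Y)).1 = AffineMap.lineMap X Y ((p2 - q2) / (q1 - q2)) := by
  have hden := Tden1_ne_zero h hX hY
  simp only [Tmap, Amat_mul_mul_Btil hX hY h.p_ne_q h.q_ne_p h.q_ne_q,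
    ← Tden1_eq hX hY h.p_ne_q h.q_ne_p h.q_ne_q, inv_smul_smul₀ hden]

lemma Tmap_snd (h : DisjointParams p1 q1 p2 q2) (hX : X * K = 1) (hY : Y * K = 1) :
    (Tmap K p1 q1 p2 q2 (X, Y)).2 = AffineMap.lineMap Y X ((p1 - q1) / (q2 - q1)) :=
  Tmap_fst h.symm hY hX

lemma Tmap_fst_mul_eq_one (h : DisjointParams p1 q1 p2 q2) (hX : X * K = 1) (hY : Y * K = 1) :
    (Tmap K p1 q1 p2 q2 (X, Y)).1 * K = 1 := by
  rw [Tmap_fst h hX hY, lineMap_mul_eq_one hX hY]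

lemma Tmap_snd_mul_eq_one (h : DisjointParams p1 q1 p2 q2) (hX : X * K = 1) (hY : Y * K = 1) :
    (Tmap K p1 q1 p2 q2 (X, Y)).2 * K = 1 :=
  Tmap_fst_mul_eq_one h.symm hY hX

lemma T12t_T13t_T23t_third_sub (h12 : DisjointParams p1 q1 p2 q2) (h13 : DisjointParams p1 q1 p3 q3)
    (h23 : DisjointParams p2 q2 p3 q3) (hX : X * K = 1) (hY : Y * K = 1) (hZ : Z * K = 1) :
    (T12t K p1 q1 p2 q2 (T13t K p1 q1 p3 q3 (T23t K p2 q2 p3 q3 (X, Y, Z)))).2.2 -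
        (T23t K p2 q2 p3 q3 (T13t K p1 q1 p3 q3 (T12t K p1 q1 p2 q2 (X, Y, Z)))).2.2 =
      ((p1 - q1) * (p2 - q2) * (2 * q3 - (p2 + q2)) /
        ((q1 - q2) * (q3 - q1) * (q3 - q2))) • (X - Y) := by
  have hX' := Tmap_fst_mul_eq_one h12 hX hY
  have hY' := Tmap_snd_mul_eq_one h12 hX hY
  have hZ' := Tmap_snd_mul_eq_one h23 hY hZ
  have hZ'' := Tmap_snd_mul_eq_one h13 hX' hZ
  simp only [T12t, T13t, T23t]
  rw [Tmap_snd h13 hX hZ', Tmap_snd h23 hY hZ, Tmap_snd h23 hY' hZ'', Tmap_snd h13 hX' hZ,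
    Tmap_fst h12 hX hY, Tmap_snd h12 hX hY,
    lineMap_lineMap_sub_lineMap_lineMap h12.q_ne_q h13.q_ne_q h23.q_ne_q]

lemma T12t_T13t_T23t_ne (h12 : DisjointParams p1 q1 p2 q2) (h13 : DisjointParams p1 q1 p3 q3)
    (h23 : DisjointParams p2 q2 p3 q3) (h1 : p1 ≠ q1) (h2 : p2 ≠ q2) (hq3 : p2 + q2 ≠ 2 * q3)
    (hX : X * K = 1) (hY : Y * K = 1) (hZ : Z * K = 1) (hXY : X ≠ Y) :
    T12t K p1 q1 p2 q2 (T13t K p1 q1 p3 q3 (T23t K p2 q2 p3 q3 (X, Y, Z))) ≠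
      T23t K p2 q2 p3 q3 (T13t K p1 q1 p3 q3 (T12t K p1 q1 p2 q2 (X, Y, Z))) := by
  intro hYB
  have hsub := T12t_T13t_T23t_third_sub h12 h13 h23 hX hY hZ
  rw [hYB, sub_self, eq_comm, smul_eq_zero_iff_left (sub_ne_zero.mpr hXY)] at hsub
  simp [sub_eq_zero, h1, h2, hq3.symm, h12.q_ne_q, h13.q_ne_q.symm, h23.q_ne_q.symm] at hsub

end Column

theorem T_is_not_YangBaxter_general {n : ℕ} {K : Matrix (Fin n) (Fin 1) ℝ}
    {p1 p2 p3 q1 q2 q3 : ℝ} (h12 : DisjointParams p1 q1 p2 q2) (h13 : DisjointParams p1 q1 p3 q3)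
    (h23 : DisjointParams p2 q2 p3 q3) (h1 : p1 ≠ q1) (h2 : p2 ≠ q2) (hq3 : p2 + q2 ≠ 2 * q3)
    {X1 X2 X3 : Mat 1 n} (hX1 : InS K X1) (hX2 : InS K X2) (hX3 : InS K X3) (hX : X1 ≠ X2) :
    Tden1 K p2 q2 p3 q3 X2 X3 ≠ 0 ∧ Tden2 K p2 q2 p3 q3 X2 X3 ≠ 0 ∧
    Tden1 K p1 q1 p3 q3 (T23t K p2 q2 p3 q3 (X1, X2, X3)).1
      (T23t K p2 q2 p3 q3 (X1, X2, X3)).2.2 ≠ 0 ∧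
    Tden2 K p1 q1 p3 q3 (T23t K p2 q2 p3 q3 (X1, X2, X3)).1
      (T23t K p2 q2 p3 q3 (X1, X2, X3)).2.2 ≠ 0 ∧
    Tden1 K p1 q1 p2 q2 (T13t K p1 q1 p3 q3 (T23t K p2 q2 p3 q3 (X1, X2, X3))).1
      (T13t K p1 q1 p3 q3 (T23t K p2 q2 p3 q3 (X1, X2, X3))).2.1 ≠ 0 ∧
    Tden2 K p1 q1 p2 q2 (T13t K p1 q1 p3 q3 (T23t K p2 q2 p3 q3 (X1, X2, X3))).1
      (T13t K p1 q1 p3 q3 (T23t K p2 q2 p3 q3 (X1, X2, X3))).2.1 ≠ 0 ∧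
    Tden1 K p1 q1 p2 q2 X1 X2 ≠ 0 ∧ Tden2 K p1 q1 p2 q2 X1 X2 ≠ 0 ∧
    Tden1 K p1 q1 p3 q3 (T12t K p1 q1 p2 q2 (X1, X2, X3)).1
      (T12t K p1 q1 p2 q2 (X1, X2, X3)).2.2 ≠ 0 ∧
    Tden2 K p1 q1 p3 q3 (T12t K p1 q1 p2 q2 (X1, X2, X3)).1
      (T12t K p1 q1 p2 q2 (X1, X2, X3)).2.2 ≠ 0 ∧
    Tden1 K p2 q2 p3 q3 (T13t K p1 q1 p3 q3 (T12t K p1 q1 p2 q2 (X1, X2, X3))).2.1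
      (T13t K p1 q1 p3 q3 (T12t K p1 q1 p2 q2 (X1, X2, X3))).2.2 ≠ 0 ∧
    Tden2 K p2 q2 p3 q3 (T13t K p1 q1 p3 q3 (T12t K p1 q1 p2 q2 (X1, X2, X3))).2.1
      (T13t K p1 q1 p3 q3 (T12t K p1 q1 p2 q2 (X1, X2, X3))).2.2 ≠ 0 ∧
    T12t K p1 q1 p2 q2 (T13t K p1 q1 p3 q3 (T23t K p2 q2 p3 q3 (X1, X2, X3)))
      ≠ T23t K p2 q2 p3 q3 (T13t K p1 q1 p3 q3 (T12t K p1 q1 p2 q2 (X1, X2, X3))) := by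
  rw [inS_iff_mul_eq_one] at hX1 hX2 hX3
  have hL3 := Tmap_snd_mul_eq_one h23 hX2 hX3
  have hL2 := Tmap_fst_mul_eq_one h23 hX2 hX3
  have hL1 := Tmap_fst_mul_eq_one h13 hX1 hL3
  have hR1 := Tmap_fst_mul_eq_one h12 hX1 hX2
  have hR2 := Tmap_snd_mul_eq_one h12 hX1 hX2
  have hR3 := Tmap_snd_mul_eq_one h13 hR1 hX3
  exact ⟨Tden1_ne_zero h23 hX2 hX3, Tden2_ne_zero h23 hX2 hX3,
    Tden1_ne_zero h13 hX1 hL3, Tden2_ne_zero h13 hX1 hL3,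
    Tden1_ne_zero h12 hL1 hL2, Tden2_ne_zero h12 hL1 hL2,
    Tden1_ne_zero h12 hX1 hX2, Tden2_ne_zero h12 hX1 hX2,
    Tden1_ne_zero h13 hR1 hX3, Tden2_ne_zero h13 hR1 hX3,
    Tden1_ne_zero h23 hR2 hR3, Tden2_ne_zero h23 hR2 hR3,
    T12t_T13t_T23t_ne h12 h13 h23 h1 h2 hq3 hX1 hX2 hX3 hX⟩

/-- the map `T` is not a Yang–Baxter map. -/
theorem T_is_not_YangBaxter :
    ∃ (m n : ℕ) (K : Matrix (Fin n) (Fin m) ℝ)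
      (p1 p2 p3 q1 q2 q3 : ℝ) (X1 X2 X3 : Mat m n),
      0 < m ∧ 0 < n ∧ K.rank = min n m ∧
      List.Pairwise (· ≠ ·) [p1, p2, p3, q1, q2, q3] ∧
      InS K X1 ∧ InS K X2 ∧ InS K X3 ∧
      -- all trace denominators in the composition T₁₂ ∘ T₁₃ ∘ T₂₃ are nonzero
      Tden1 K p2 q2 p3 q3 X2 X3 ≠ 0 ∧ Tden2 K p2 q2 p3 q3 X2 X3 ≠ 0 ∧
      Tden1 K p1 q1 p3 q3 (T23t K p2 q2 p3 q3 (X1, X2, X3)).1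
        (T23t K p2 q2 p3 q3 (X1, X2, X3)).2.2 ≠ 0 ∧
      Tden2 K p1 q1 p3 q3 (T23t K p2 q2 p3 q3 (X1, X2, X3)).1
        (T23t K p2 q2 p3 q3 (X1, X2, X3)).2.2 ≠ 0 ∧
      Tden1 K p1 q1 p2 q2 (T13t K p1 q1 p3 q3 (T23t K p2 q2 p3 q3 (X1, X2, X3))).1
        (T13t K p1 q1 p3 q3 (T23t K p2 q2 p3 q3 (X1, X2, X3))).2.1 ≠ 0 ∧
      Tden2 K p1 q1 p2 q2 (T13t K p1 q1 p3 q3 (T23t K p2 q2 p3 q3 (X1, X2, X3))).1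
        (T13t K p1 q1 p3 q3 (T23t K p2 q2 p3 q3 (X1, X2, X3))).2.1 ≠ 0 ∧
      -- all trace denominators in the composition T₂₃ ∘ T₁₃ ∘ T₁₂ are nonzero
      Tden1 K p1 q1 p2 q2 X1 X2 ≠ 0 ∧ Tden2 K p1 q1 p2 q2 X1 X2 ≠ 0 ∧
      Tden1 K p1 q1 p3 q3 (T12t K p1 q1 p2 q2 (X1, X2, X3)).1
        (T12t K p1 q1 p2 q2 (X1, X2, X3)).2.2 ≠ 0 ∧
      Tden2 K p1 q1 p3 q3 (T12t K p1 q1 p2 q2 (X1, X2, X3)).1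
        (T12t K p1 q1 p2 q2 (X1, X2, X3)).2.2 ≠ 0 ∧
      Tden1 K p2 q2 p3 q3 (T13t K p1 q1 p3 q3 (T12t K p1 q1 p2 q2 (X1, X2, X3))).2.1
        (T13t K p1 q1 p3 q3 (T12t K p1 q1 p2 q2 (X1, X2, X3))).2.2 ≠ 0 ∧
      Tden2 K p2 q2 p3 q3 (T13t K p1 q1 p3 q3 (T12t K p1 q1 p2 q2 (X1, X2, X3))).2.1
        (T13t K p1 q1 p3 q3 (T12t K p1 q1 p2 q2 (X1, X2, X3))).2.2 ≠ 0 ∧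
      -- and the two compositions disagree
      T12t K p1 q1 p2 q2 (T13t K p1 q1 p3 q3 (T23t K p2 q2 p3 q3 (X1, X2, X3)))
        ≠ T23t K p2 q2 p3 q3 (T13t K p1 q1 p3 q3 (T12t K p1 q1 p2 q2 (X1, X2, X3))) := by
  have hrow (x : ℝ) : (!![1, x] : Mat 1 2) * !![(1 : ℝ); 0] = 1 := by
    ext i j
    simp [one_apply, Subsingleton.elim i j]
  have hS (x : ℝ) : InS !![1; 0] !![1, x] := inS_iff_mul_eq_one.mpr (hrow x)
  exact ⟨1, 2, !![1; 0], 0, 1, 2, 3, 4, 5, !![1, 1], !![1, 0], !![1, 0], one_pos, two_pos,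
    rank_eq_of_left_mul_eq_one (hrow 0), by norm_num, hS 1, hS 0, hS 0,
    T_is_not_YangBaxter_general (by constructor <;> norm_num) (by constructor <;> norm_num)
      (by constructor <;> norm_num) (by norm_num) (by norm_num) (by norm_num)
      (hS 1) (hS 0) (hS 0) (by simp)⟩
end

section
/- Let p1, p2, p3, q1, q2, q3 be reals such that p_i ≠ q_j for all i, j. For i ≠ j define the 2×2 matrix R(i,j) = (1/(p_i−q_j))·[[p_i−p_j, p_i−q_i],[p_j−q_j, q_i−q_j]], and let R̂_{12}, R̂_{13}, R̂_{23} be the 3×3 matrices obtained by placing the entries of R(1,2), R(1,3), R(2,3) in the rows and columns indexed by the corresponding pair of indices and the entry 1 on the remaining diagonal position (all other entries 0). Then the Yang–Baxter equation holds in matrix form: R̂_{12} R̂_{13} R̂_{23} = R̂_{23} R̂_{13} R̂_{12}. -/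
open Matrix

/-- The 2×2 linear Yang–Baxter matrix
`R(i,j) = (1/(pᵢ−qⱼ)) · [[pᵢ−pⱼ, pᵢ−qᵢ],[pⱼ−qⱼ, qᵢ−qⱼ]]`. -/
noncomputable def R2 (pi qi pj qj : ℝ) : Matrix (Fin 2) (Fin 2) ℝ :=
  (pi - qj)⁻¹ • Matrix.of ![![pi - pj, pi - qi], ![pj - qj, qi - qj]]

/-- `R(1,2)` embedded in 3×3 matrices: it acts on slots 1 and 2 and as identity on slot 3. -/
noncomputable def Rh12 (p1 q1 p2 q2 : ℝ) : Matrix (Fin 3) (Fin 3) ℝ :=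
  Matrix.of ![![R2 p1 q1 p2 q2 0 0, R2 p1 q1 p2 q2 0 1, 0],
              ![R2 p1 q1 p2 q2 1 0, R2 p1 q1 p2 q2 1 1, 0],
              ![0, 0, 1]]

/-- `R(1,3)` embedded in 3×3 matrices: it acts on slots 1 and 3 and as identity on slot 2. -/
noncomputable def Rh13 (p1 q1 p3 q3 : ℝ) : Matrix (Fin 3) (Fin 3) ℝ :=
  Matrix.of ![![R2 p1 q1 p3 q3 0 0, 0, R2 p1 q1 p3 q3 0 1],
              ![0, 1, 0],
              ![R2 p1 q1 p3 q3 1 0, 0, R2 p1 q1 p3 q3 1 1]]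

/-- `R(2,3)` embedded in 3×3 matrices: it acts on slots 2 and 3 and as identity on slot 1. -/
noncomputable def Rh23 (p2 q2 p3 q3 : ℝ) : Matrix (Fin 3) (Fin 3) ℝ :=
  Matrix.of ![![1, 0, 0],
              ![0, R2 p2 q2 p3 q3 0 0, R2 p2 q2 p3 q3 0 1],
              ![0, R2 p2 q2 p3 q3 1 0, R2 p2 q2 p3 q3 1 1]]

/-!
To a polarization `ξ` with parameters `p`, `q` attach the Lax matrix `[[X - q, ξ], [0, X - p]]` over
the polynomials in the spectral parameter. Applied to columns, `R(i,j)` carries the polarizations of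
a product of two Lax matrices to those of its refactorization in the opposite order. Hence both
sides of the Yang–Baxter equation refactorize a triple product from order `ijk` into order `kji`,
and they agree because that factorization is unique.
-/

open Polynomial

section LaxMatrix

variable {ι A : Type*} [CommRing A]

/-- The Lax matrix of soliton `i` with polarization `ξ i` in the spectral parameter `X`. Parameters
and polarizations are families over `ι`, so that a linear map can act on all polarizations. -/
noncomputable def laxMatrix (p q ξ : ι → A) (i : ι) : Matrix (Fin 2) (Fin 2) A[X] :=
  !![X - C (q i), C (ξ i); 0, X - C (p i)]

theorem laxMatrix_congr {p q ξ η : ι → A} {i : ι} (h : ξ i = η i) :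
    laxMatrix p q ξ i = laxMatrix p q η i := by
  rw [laxMatrix, laxMatrix, h]

theorem laxMatrix_mul (p q ξ η : ι → A) (i j : ι) :
    laxMatrix p q ξ i * laxMatrix p q η j =
      !![(X - C (q i)) * (X - C (q j)), (X - C (q i)) * C (η j) + C (ξ i) * (X - C (p j));
        0, (X - C (p i)) * (X - C (p j))] := by
  simp [laxMatrix]

theorem laxMatrix_mul_mul_apply_zero_one (p q ξ : ι → A) (i j k : ι) :
    (laxMatrix p q ξ i * laxMatrix p q ξ j * laxMatrix p q ξ k) 0 1 =
      C (ξ i) * ((X - C (p j)) * (X - C (p k))) + C (ξ j) * ((X - C (q i)) * (X - C (p k))) +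
        C (ξ k) * ((X - C (q i)) * (X - C (q j))) := by
  rw [laxMatrix_mul, laxMatrix, mul_apply, Fin.sum_univ_two]
  simp only [of_apply, cons_val_zero, cons_val_one, cons_val_fin_one]
  ring

variable [IsDomain A]

/-- The coefficients are read off successively at the spectral values `a₃` and `b₁`; what remains
is a multiple of `(X - b₁) * (X - a₃)`. -/
theorem eq_zero_of_quadratic_combination_eq_zero {a₂ a₃ b₁ b₂ x y z : A}
    (h₂₁ : a₂ ≠ b₁) (h₃₁ : a₃ ≠ b₁) (h₃₂ : a₃ ≠ b₂)
    (h : C x * ((X - C a₂) * (X - C a₃)) + C y * ((X - C b₁) * (X - C a₃)) +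
      C z * ((X - C b₁) * (X - C b₂)) = 0) :
    x = 0 ∧ y = 0 ∧ z = 0 := by
  have hz : z = 0 := by
    simpa [sub_ne_zero.mpr h₃₁, sub_ne_zero.mpr h₃₂] using congrArg (eval a₃) h
  have hx : x = 0 := by
    simpa [sub_ne_zero.mpr h₂₁.symm, sub_ne_zero.mpr h₃₁.symm] using congrArg (eval b₁) h
  have hy : y = 0 := by
    simpa [hx, hz, X_sub_C_ne_zero] using h
  exact ⟨hx, hy, hz⟩

theorem eq_of_laxMatrix_mul_mul_eq {p q ξ η : ι → A} {i j k : ι}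
    (hji : p j ≠ q i) (hki : p k ≠ q i) (hkj : p k ≠ q j)
    (h : laxMatrix p q ξ i * laxMatrix p q ξ j * laxMatrix p q ξ k =
      laxMatrix p q η i * laxMatrix p q η j * laxMatrix p q η k) :
    ξ i = η i ∧ ξ j = η j ∧ ξ k = η k := by
  have entry_eq := congrFun₂ h 0 1
  simp only [laxMatrix_mul_mul_apply_zero_one] at entry_eq
  simpa only [sub_eq_zero] using
    eq_zero_of_quadratic_combination_eq_zero (x := ξ i - η i) (y := ξ j - η j) (z := ξ k - η k)
      hji hki hkj (by simp only [C_sub]; linear_combination entry_eq)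

end LaxMatrix

section LinearR

variable {ι K : Type*} [Fintype ι] [DecidableEq ι] [Field K] {p q : ι → K} {i j k : ι}

/-- The linear Yang–Baxter matrix `R(i,j)` acting on slots `i` and `j` of a family indexed by `ι`,
encoded through the fact that `R(i,j) - 1` has rank one. For `p i = q j` the convention `0⁻¹ = 0`
turns it into the identity. -/
noncomputable def linearR (p q : ι → K) (i j : ι) : Matrix ι ι K :=
  1 + (p i - q j)⁻¹ • vecMulVec (Pi.single j 1 - Pi.single i 1)
    (Pi.single i (p j - q j) - Pi.single j (p i - q i))

theorem linearR_mulVec (p q ξ : ι → K) (i j : ι) :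
    linearR p q i j *ᵥ ξ =
      ξ + ((p i - q j)⁻¹ * ((p j - q j) * ξ i - (p i - q i) * ξ j)) •
        (Pi.single j 1 - Pi.single i 1) := by
  rw [linearR, add_mulVec, one_mulVec, smul_mulVec, vecMulVec_mulVec, op_smul_eq_smul,
    sub_dotProduct, single_dotProduct, single_dotProduct, smul_smul]

theorem linearR_mulVec_apply_left (hij : i ≠ j) (h : p i ≠ q j) (ξ : ι → K) :
    (linearR p q i j *ᵥ ξ) i = (p i - q j)⁻¹ * ((p i - p j) * ξ i + (p i - q i) * ξ j) := by
  have hne : p i - q j ≠ 0 := sub_ne_zero.mpr h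
  simp only [linearR_mulVec, Pi.add_apply, Pi.smul_apply, Pi.sub_apply, Pi.single_eq_same,
    Pi.single_eq_of_ne hij, smul_eq_mul]
  field_simp
  ring

theorem linearR_mulVec_apply_right (hij : i ≠ j) (h : p i ≠ q j) (ξ : ι → K) :
    (linearR p q i j *ᵥ ξ) j = (p i - q j)⁻¹ * ((p j - q j) * ξ i + (q i - q j) * ξ j) := by
  have hne : p i - q j ≠ 0 := sub_ne_zero.mpr h
  simp only [linearR_mulVec, Pi.add_apply, Pi.smul_apply, Pi.sub_apply, Pi.single_eq_same,
    Pi.single_eq_of_ne hij.symm, smul_eq_mul]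
  field_simp
  ring

theorem linearR_mulVec_apply_of_ne (hki : k ≠ i) (hkj : k ≠ j) (ξ : ι → K) :
    (linearR p q i j *ᵥ ξ) k = ξ k := by
  simp [linearR_mulVec, hki, hkj]

theorem laxMatrix_linearR_mulVec_of_ne (hki : k ≠ i) (hkj : k ≠ j) (ξ : ι → K) :
    laxMatrix p q (linearR p q i j *ᵥ ξ) k = laxMatrix p q ξ k :=
  laxMatrix_congr (linearR_mulVec_apply_of_ne hki hkj ξ)

theorem laxMatrix_linearR_mulVec_mul (hij : i ≠ j) (h : p i ≠ q j) (ξ : ι → K) :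
    laxMatrix p q (linearR p q i j *ᵥ ξ) j * laxMatrix p q (linearR p q i j *ᵥ ξ) i =
      laxMatrix p q ξ i * laxMatrix p q ξ j := by
  have hne : p i - q j ≠ 0 := sub_ne_zero.mpr h
  set η := linearR p q i j *ᵥ ξ
  have sum_eq : η i + η j = ξ i + ξ j := by
    simp only [η, linearR_mulVec_apply_left hij h, linearR_mulVec_apply_right hij h]
    field_simp
    ring
  have moment_eq : q j * η i + p i * η j = p j * ξ i + q i * ξ j := by
    simp only [η, linearR_mulVec_apply_left hij h, linearR_mulVec_apply_right hij h]
    field_simp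
    ring
  have C_sum_eq := congrArg (C : K → K[X]) sum_eq
  have C_moment_eq := congrArg (C : K → K[X]) moment_eq
  simp only [C_add, C_mul] at C_sum_eq C_moment_eq
  have offDiag_eq : (X - C (q j)) * C (η i) + C (η j) * (X - C (p i)) =
      (X - C (q i)) * C (ξ j) + C (ξ i) * (X - C (p j)) := by
    linear_combination X * C_sum_eq - C_moment_eq
  rw [laxMatrix_mul, laxMatrix_mul, offDiag_eq, mul_comm (X - C (q j)), mul_comm (X - C (p j))]

theorem laxMatrix_yangBaxter_lhs (hij : i ≠ j) (hik : i ≠ k) (hjk : j ≠ k)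
    (hpij : p i ≠ q j) (hpik : p i ≠ q k) (hpjk : p j ≠ q k) {ξ η : ι → K}
    (hη : η = (linearR p q i j * linearR p q i k * linearR p q j k) *ᵥ ξ) :
    laxMatrix p q η k * laxMatrix p q η j * laxMatrix p q η i =
      laxMatrix p q ξ i * laxMatrix p q ξ j * laxMatrix p q ξ k := by
  simp only [← mulVec_mulVec] at hη
  set ξ₁ := linearR p q j k *ᵥ ξ with hξ₁
  set ξ₂ := linearR p q i k *ᵥ ξ₁ with hξ₂
  calc laxMatrix p q η k * laxMatrix p q η j * laxMatrix p q η i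
    _ = laxMatrix p q ξ₂ k * laxMatrix p q ξ₂ i * laxMatrix p q ξ₂ j := by
        rw [hη, mul_assoc, laxMatrix_linearR_mulVec_mul hij hpij,
          laxMatrix_linearR_mulVec_of_ne hik.symm hjk.symm, mul_assoc]
    _ = laxMatrix p q ξ₁ i * laxMatrix p q ξ₁ k * laxMatrix p q ξ₁ j := by
        rw [hξ₂, laxMatrix_linearR_mulVec_mul hik hpik,
          laxMatrix_linearR_mulVec_of_ne hij.symm hjk]
    _ = laxMatrix p q ξ i * laxMatrix p q ξ j * laxMatrix p q ξ k := by
        rw [hξ₁, mul_assoc, laxMatrix_linearR_mulVec_mul hjk hpjk,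
          laxMatrix_linearR_mulVec_of_ne hij hik, mul_assoc]

theorem laxMatrix_yangBaxter_rhs (hij : i ≠ j) (hik : i ≠ k) (hjk : j ≠ k)
    (hpij : p i ≠ q j) (hpik : p i ≠ q k) (hpjk : p j ≠ q k) {ξ η : ι → K}
    (hη : η = (linearR p q j k * linearR p q i k * linearR p q i j) *ᵥ ξ) :
    laxMatrix p q η k * laxMatrix p q η j * laxMatrix p q η i =
      laxMatrix p q ξ i * laxMatrix p q ξ j * laxMatrix p q ξ k := by
  simp only [← mulVec_mulVec] at hη
  set ξ₁ := linearR p q i j *ᵥ ξ with hξ₁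
  set ξ₂ := linearR p q i k *ᵥ ξ₁ with hξ₂
  calc laxMatrix p q η k * laxMatrix p q η j * laxMatrix p q η i
    _ = laxMatrix p q ξ₂ j * laxMatrix p q ξ₂ k * laxMatrix p q ξ₂ i := by
        rw [hη, laxMatrix_linearR_mulVec_mul hjk hpjk, laxMatrix_linearR_mulVec_of_ne hij hik]
    _ = laxMatrix p q ξ₁ j * laxMatrix p q ξ₁ i * laxMatrix p q ξ₁ k := by
        rw [hξ₂, mul_assoc, laxMatrix_linearR_mulVec_mul hik hpik,
          laxMatrix_linearR_mulVec_of_ne hij.symm hjk, mul_assoc]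
    _ = laxMatrix p q ξ i * laxMatrix p q ξ j * laxMatrix p q ξ k := by
        rw [hξ₁, laxMatrix_linearR_mulVec_mul hij hpij,
          laxMatrix_linearR_mulVec_of_ne hik.symm hjk.symm]

theorem Rmatrix_YangBaxter_general (hij : i ≠ j) (hik : i ≠ k) (hjk : j ≠ k)
    (hpij : p i ≠ q j) (hpik : p i ≠ q k) (hpjk : p j ≠ q k) :
    linearR p q i j * linearR p q i k * linearR p q j k =
      linearR p q j k * linearR p q i k * linearR p q i j := by
  refine ext_iff_mulVec.mpr fun ξ => ?_
  obtain ⟨eq_k, eq_j, eq_i⟩ := eq_of_laxMatrix_mul_mul_eq hpjk hpik hpij <|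
    (laxMatrix_yangBaxter_lhs hij hik hjk hpij hpik hpjk (ξ := ξ) rfl).trans
      (laxMatrix_yangBaxter_rhs hij hik hjk hpij hpik hpjk rfl).symm
  ext l
  by_cases hl : l = i ∨ l = j ∨ l = k
  · rcases hl with rfl | rfl | rfl <;> assumption
  · obtain ⟨hli, hlj, hlk⟩ : l ≠ i ∧ l ≠ j ∧ l ≠ k := by simpa only [not_or] using hl
    simp only [← mulVec_mulVec, linearR_mulVec_apply_of_ne, hli, hlj, hlk, ne_eq, not_false_eq_true]

end LinearR

section RealMatrices

theorem R2_mulVec_eq_linearR_mulVec {ι : Type*} [Fintype ι] [DecidableEq ι] {p q : ι → ℝ} {i j : ι}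
    (hij : i ≠ j) (h : p i ≠ q j) (ξ : ι → ℝ) :
    R2 (p i) (q i) (p j) (q j) *ᵥ ![ξ i, ξ j] =
      ![(linearR p q i j *ᵥ ξ) i, (linearR p q i j *ᵥ ξ) j] := by
  rw [linearR_mulVec_apply_left hij h, linearR_mulVec_apply_right hij h]
  ext a
  fin_cases a <;> simp [R2, mulVec, dotProduct, Fin.sum_univ_two, mul_add, mul_assoc]

variable {p1 q1 p2 q2 p3 q3 : ℝ}

theorem Rh12_eq_linearR (p3 q3 : ℝ) (h : p1 ≠ q2) :
    Rh12 p1 q1 p2 q2 = linearR ![p1, p2, p3] ![q1, q2, q3] 0 1 := by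
  refine ext_iff_mulVec.mpr fun ξ => ?_
  have slots_eq := R2_mulVec_eq_linearR_mulVec (p := ![p1, p2, p3]) (q := ![q1, q2, q3])
    (i := 0) (j := 1) (by decide) h ξ
  ext l
  fin_cases l
  · simpa [Rh12, mulVec, dotProduct, Fin.sum_univ_three] using congrFun slots_eq 0
  · simpa [Rh12, mulVec, dotProduct, Fin.sum_univ_three] using congrFun slots_eq 1
  · simpa [Rh12, mulVec, dotProduct, Fin.sum_univ_three] using
      (linearR_mulVec_apply_of_ne (by decide) (by decide) ξ).symm

theorem Rh13_eq_linearR (p2 q2 : ℝ) (h : p1 ≠ q3) :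
    Rh13 p1 q1 p3 q3 = linearR ![p1, p2, p3] ![q1, q2, q3] 0 2 := by
  refine ext_iff_mulVec.mpr fun ξ => ?_
  have slots_eq := R2_mulVec_eq_linearR_mulVec (p := ![p1, p2, p3]) (q := ![q1, q2, q3])
    (i := 0) (j := 2) (by decide) h ξ
  ext l
  fin_cases l
  · simpa [Rh13, mulVec, dotProduct, Fin.sum_univ_three] using congrFun slots_eq 0
  · simpa [Rh13, mulVec, dotProduct, Fin.sum_univ_three] using
      (linearR_mulVec_apply_of_ne (by decide) (by decide) ξ).symm
  · simpa [Rh13, mulVec, dotProduct, Fin.sum_univ_three] using congrFun slots_eq 1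

theorem Rh23_eq_linearR (p1 q1 : ℝ) (h : p2 ≠ q3) :
    Rh23 p2 q2 p3 q3 = linearR ![p1, p2, p3] ![q1, q2, q3] 1 2 := by
  refine ext_iff_mulVec.mpr fun ξ => ?_
  have slots_eq := R2_mulVec_eq_linearR_mulVec (p := ![p1, p2, p3]) (q := ![q1, q2, q3])
    (i := 1) (j := 2) (by decide) h ξ
  ext l
  fin_cases l
  · simpa [Rh23, mulVec, dotProduct, Fin.sum_univ_three] using
      (linearR_mulVec_apply_of_ne (by decide) (by decide) ξ).symm
  · simpa [Rh23, mulVec, dotProduct, Fin.sum_univ_three] using congrFun slots_eq 0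
  · simpa [Rh23, mulVec, dotProduct, Fin.sum_univ_three] using congrFun slots_eq 1

end RealMatrices

/-- the matrix form of the Yang–Baxter equation
`R̂₁₂ R̂₁₃ R̂₂₃ = R̂₂₃ R̂₁₃ R̂₁₂` for the linear (vector soliton) R-matrix. -/
theorem Rmatrix_YangBaxter (p1 p2 p3 q1 q2 q3 : ℝ)
    (h11 : p1 ≠ q1) (h12 : p1 ≠ q2) (h13 : p1 ≠ q3)
    (h21 : p2 ≠ q1) (h22 : p2 ≠ q2) (h23 : p2 ≠ q3)
    (h31 : p3 ≠ q1) (h32 : p3 ≠ q2) (h33 : p3 ≠ q3) :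
    Rh12 p1 q1 p2 q2 * Rh13 p1 q1 p3 q3 * Rh23 p2 q2 p3 q3
      = Rh23 p2 q2 p3 q3 * Rh13 p1 q1 p3 q3 * Rh12 p1 q1 p2 q2 := by
  have yangBaxter := Rmatrix_YangBaxter_general (p := ![p1, p2, p3]) (q := ![q1, q2, q3])
    (i := 0) (j := 1) (k := 2) (by decide) (by decide) (by decide) h12 h13 h23
  rwa [← Rh12_eq_linearR p3 q3 h12, ← Rh13_eq_linearR p2 q2 h13,
    ← Rh23_eq_linearR p1 q1 h23] at yangBaxter
end

section
/- Let m, n, N be positive integers, K a real n×m matrix, φ0 : ℝ² × ℤ → ℝ^{m×n} a twice continuously differentiable (in x, y) solution of the p2DTL_K equation φ_{xy} − φ⁺ + 2φ − φ⁻ = (φ⁺ − φ) K φ_y − φ_y K (φ − φ⁻). Let θ : ℝ² × ℤ → ℝ^{m×N}, χ : ℝ² × ℤ → ℝ^{N×n}, Ω : ℝ² × ℤ → ℝ^{N×N} be differentiable functions satisfying θ_x = θ⁺ − θ + (φ0⁺ − φ0) K θ, θ_y = θ − θ⁻ − φ0_y K θ⁻; χ_x = χ − χ⁻ − χ K (φ0⁺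 − φ0), χ_y = χ⁺ − χ + χ⁺ K φ0_y⁺; and Ω − Ω⁻ = −χ K θ, Ω_x = −χ K θ⁺, Ω_y = −χ⁺ K θ − χ⁺ K φ0_y⁺ θ. Assume Ω(x,y,k) is invertible for all (x,y,k) and that θ, χ, Ω are twice continuously differentiable. Then φ := φ0 − θ (Ω⁻)^{-1} χ⁻ is again a solution of the p2DTL_K equation. -/
open Matrix

/-- Entrywise partial derivative with respect to the first (continuous) variable `x`. -/
noncomputable def pdX {a b : Type*} (f : ℝ → ℝ → ℤ → Matrix a b ℝ) (x y : ℝ) (k : ℤ) :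
    Matrix a b ℝ :=
  Matrix.of fun i j => deriv (fun s => f s y k i j) x

/-- Entrywise partial derivative with respect to the second (continuous) variable `y`. -/
noncomputable def pdY {a b : Type*} (f : ℝ → ℝ → ℤ → Matrix a b ℝ) (x y : ℝ) (k : ℤ) :
    Matrix a b ℝ :=
  Matrix.of fun i j => deriv (fun s => f x s k i j) y

/-- The matrix potential two-dimensional Toda lattice (p2DTL_K) equation
`φ_{xy} − φ⁺ + 2φ − φ⁻ = (φ⁺ − φ) K φ_y − φ_y K (φ − φ⁻)`. -/
def IsP2DTL {m n : ℕ} (K : Matrix (Fin n) (Fin m) ℝ)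
    (φ : ℝ → ℝ → ℤ → Matrix (Fin m) (Fin n) ℝ) : Prop :=
  ∀ (x y : ℝ) (k : ℤ),
    pdY (pdX φ) x y k - φ x y (k + 1) + 2 • φ x y k - φ x y (k - 1)
      = (φ x y (k + 1) - φ x y k) * K * pdY φ x y k
        - pdY φ x y k * K * (φ x y k - φ x y (k - 1))

/-!
The correction `P = θ (Ω⁻)⁻¹ χ⁻` acts on the zero-curvature form
`φ_xy = (φ⁺ - φ)(1 + K φ_y) - (1 + φ_y K)(φ - φ⁻)` of the equation as a gauge transformation.
Set `A = θ (Ω⁻)⁻¹ χ` and `B = θ Ω⁻¹ χ`. The linear systems give `A_x` and `B_x` in terms of `A`, `B`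
and the old and new differences `φ⁺ - φ`, and they give
`1 + K φ_y = (1 - K A)(1 + K φ0_y)(1 + K B⁻)` and `1 + φ_y K = (1 - A K)(1 + φ0_y K)(1 + B⁻ K)`.
Hence the defect of `φ` in the equation is `(1 - A K)` times the defect of `φ0` times `(1 + K B⁻)`.
-/

section MatrixCalculus

open scoped Matrix.Norms.Operator

variable {𝕜 E l m n : Type*} [NontriviallyNormedField 𝕜] [NormedAddCommGroup E] [NormedSpace 𝕜 E]

theorem hasDerivAt_matrix_iff [Finite n] {f : 𝕜 → Matrix m n 𝕜} {f' : Matrix m n 𝕜} {x : 𝕜} :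
    HasDerivAt f f' x ↔ ∀ i j, HasDerivAt (fun s => f s i j) (f' i j) x := by
  cases nonempty_fintype n
  exact hasDerivAt_pi.trans (forall_congr' fun _ => hasDerivAt_pi)

theorem contDiff_matrix_of_entries [Fintype m] [Fintype n] {r : WithTop ℕ∞} {f : E → Matrix m n 𝕜}
    (hf : ∀ i j, ContDiff 𝕜 r fun p => f p i j) : ContDiff 𝕜 r f := by
  classical
  have sum_single : f = fun p => ∑ i, ∑ j, f p i j • Matrix.single i j (1 : 𝕜) := by
    funext p
    simpa using Matrix.matrix_eq_sum_single (f p)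
  rw [sum_single]
  fun_prop

theorem isBoundedBilinearMap_matrix_mul [Fintype l] [Fintype m] [Fintype n] :
    IsBoundedBilinearMap 𝕜 fun p : Matrix l m 𝕜 × Matrix m n 𝕜 => p.1 * p.2 where
  add_left := Matrix.add_mul
  smul_left := Matrix.smul_mul
  add_right := Matrix.mul_add
  smul_right c A B := Matrix.mul_smul A c B
  bound := ⟨1, one_pos, fun A B => by simpa using Matrix.linfty_opNorm_mul A B⟩

theorem contDiff_matrix_mul [Fintype l] [Fintype m] [Fintype n] {r : WithTop ℕ∞}
    {f : E → Matrix l m 𝕜} {g : E → Matrix m n 𝕜} (hf : ContDiff 𝕜 r f)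
    (hg : ContDiff 𝕜 r g) : ContDiff 𝕜 r fun p => f p * g p :=
  ContDiff.comp (g := fun p : Matrix l m 𝕜 × Matrix m n 𝕜 => p.1 * p.2)
    isBoundedBilinearMap_matrix_mul.contDiff (hf.prodMk hg)

theorem hasDerivAt_matrix_mul [Finite l] [Fintype m] [Finite n]
    {f : 𝕜 → Matrix l m 𝕜} {g : 𝕜 → Matrix m n 𝕜} {f' : Matrix l m 𝕜} {g' : Matrix m n 𝕜} {x : 𝕜}
    (hf : HasDerivAt f f' x) (hg : HasDerivAt g g' x) :
    HasDerivAt (fun s => f s * g s) (f' * g x + f x * g') x := by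
  cases nonempty_fintype l
  cases nonempty_fintype n
  rw [add_comm]
  exact isBoundedBilinearMap_matrix_mul.toContinuousLinearMap.hasDerivAt_of_bilinear
    (fun _ => hf) (fun _ => hg)

theorem hasDerivAt_matrix_mul_const [Finite l] [Fintype m] [Finite n]
    {f : 𝕜 → Matrix l m 𝕜} {f' : Matrix l m 𝕜} {x : 𝕜} (hf : HasDerivAt f f' x)
    (C : Matrix m n 𝕜) : HasDerivAt (fun s => f s * C) (f' * C) x := by
  cases nonempty_fintype n
  simpa using hasDerivAt_matrix_mul hf (hasDerivAt_const x C)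

theorem hasDerivAt_matrix_const_mul [Finite l] [Fintype m] [Finite n]
    {f : 𝕜 → Matrix m n 𝕜} {f' : Matrix m n 𝕜} {x : 𝕜} (C : Matrix l m 𝕜)
    (hf : HasDerivAt f f' x) : HasDerivAt (fun s => C * f s) (C * f') x := by
  cases nonempty_fintype l
  simpa using hasDerivAt_matrix_mul (hasDerivAt_const x C) hf

-- The uniform structure is spelled out because the calculus of `Ring.inverse` needs the one of the
-- operator norm, whereas instance search returns the entrywise one.
theorem completeSpace_matrix [CompleteSpace 𝕜] [Fintype m] [Fintype n] :
    @CompleteSpace (Matrix m n 𝕜) PseudoMetricSpace.toUniformSpace :=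
  FiniteDimensional.complete 𝕜 _

variable [CompleteSpace 𝕜] [Fintype n] [DecidableEq n]

theorem contDiff_matrix_inv {r : WithTop ℕ∞} {f : E → Matrix n n 𝕜} (hf : ContDiff 𝕜 r f)
    (hunit : ∀ p, IsUnit (f p)) : ContDiff 𝕜 r fun p => (f p)⁻¹ := by
  have := completeSpace_matrix (𝕜 := 𝕜) (m := n) (n := n)
  simp only [Matrix.nonsing_inv_eq_ringInverse]
  exact contDiff_iff_contDiffAt.2 fun p =>
    (contDiffAt_ringInverse 𝕜 (hunit p).unit).comp p hf.contDiffAt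

theorem hasDerivAt_matrix_inv {f : 𝕜 → Matrix n n 𝕜} {f' : Matrix n n 𝕜} {x : 𝕜}
    (hf : HasDerivAt f f' x) (hunit : IsUnit (f x)) :
    HasDerivAt (fun s => (f s)⁻¹) (-((f x)⁻¹ * f' * (f x)⁻¹)) x := by
  have := completeSpace_matrix (𝕜 := 𝕜) (m := n) (n := n)
  have ring_inverse : HasFDerivAt _ _ (f x) := hasFDerivAt_ringInverse (𝕜 := 𝕜) hunit.unit
  simpa [Matrix.nonsing_inv_eq_ringInverse, ← Ring.inverse_unit]
    using! ring_inverse.comp_hasDerivAt x hf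

theorem hasDerivAt_matrix_mul_inv_mul [Finite l] [Finite m]
    {f : 𝕜 → Matrix l n 𝕜} {g : 𝕜 → Matrix n n 𝕜} {h : 𝕜 → Matrix n m 𝕜}
    {f' : Matrix l n 𝕜} {g' : Matrix n n 𝕜} {h' : Matrix n m 𝕜} {x : 𝕜}
    (hf : HasDerivAt f f' x) (hg : HasDerivAt g g' x) (hh : HasDerivAt h h' x)
    (hunit : IsUnit (g x)) :
    HasDerivAt (fun s => f s * (g s)⁻¹ * h s)
      (f' * (g x)⁻¹ * h x - f x * (g x)⁻¹ * g' * (g x)⁻¹ * h x + f x * (g x)⁻¹ * h') x := by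
  convert! hasDerivAt_matrix_mul (hasDerivAt_matrix_mul hf (hasDerivAt_matrix_inv hg hunit)) hh
    using 1
  simp only [Matrix.add_mul, Matrix.mul_neg, Matrix.neg_mul, Matrix.mul_assoc, sub_eq_add_neg]

end MatrixCalculus

section PartialDerivatives

open scoped Matrix.Norms.Operator

variable {F : Type*} [NormedAddCommGroup F] [NormedSpace ℝ F] {g : ℝ × ℝ → F} {x y : ℝ}

theorem hasDerivAt_slice_fst (hg : DifferentiableAt ℝ g (x, y)) :
    HasDerivAt (fun s => g (s, y)) (fderiv ℝ g (x, y) (1, 0)) x :=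
  hg.hasFDerivAt.comp_hasDerivAt x ((hasDerivAt_id x).prodMk (hasDerivAt_const x y))

theorem hasDerivAt_slice_snd (hg : DifferentiableAt ℝ g (x, y)) :
    HasDerivAt (fun t => g (x, t)) (fderiv ℝ g (x, y) (0, 1)) y :=
  hg.hasFDerivAt.comp_hasDerivAt y ((hasDerivAt_const y x).prodMk (hasDerivAt_id y))

theorem hasDerivAt_fderiv_slice_fst (hg : DifferentiableAt ℝ (fderiv ℝ g) (x, y)) (v : ℝ × ℝ) :
    HasDerivAt (fun s => fderiv ℝ g (s, y) v) (fderiv ℝ (fderiv ℝ g) (x, y) (1, 0) v) x := by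
  simpa using (hasDerivAt_slice_fst hg).clm_apply (hasDerivAt_const x v)

theorem hasDerivAt_fderiv_slice_snd (hg : DifferentiableAt ℝ (fderiv ℝ g) (x, y)) (v : ℝ × ℝ) :
    HasDerivAt (fun t => fderiv ℝ g (x, t) v) (fderiv ℝ (fderiv ℝ g) (x, y) (0, 1) v) y := by
  simpa using (hasDerivAt_slice_snd hg).clm_apply (hasDerivAt_const y v)

variable {a b : Type*} {f : ℝ → ℝ → ℤ → Matrix a b ℝ} {f' : Matrix a b ℝ} {k : ℤ}

theorem pdX_eq_of_hasDerivAt [Finite b]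
    (h : HasDerivAt (fun s => f s y k) f' x) : pdX f x y k = f' :=
  Matrix.ext fun i j => (hasDerivAt_matrix_iff.1 h i j).deriv

theorem pdY_eq_of_hasDerivAt [Finite b]
    (h : HasDerivAt (fun t => f x t k) f' y) : pdY f x y k = f' :=
  Matrix.ext fun i j => (hasDerivAt_matrix_iff.1 h i j).deriv

theorem hasDerivAt_pdX [Finite a] [Finite b]
    (hf : DifferentiableAt ℝ (fun p : ℝ × ℝ => f p.1 p.2 k) (x, y)) :
    HasDerivAt (fun s => f s y k) (pdX f x y k) x := by
  cases nonempty_fintype a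
  cases nonempty_fintype b
  have h := hasDerivAt_slice_fst hf
  rwa [← pdX_eq_of_hasDerivAt h] at h

theorem hasDerivAt_pdY [Finite a] [Finite b]
    (hf : DifferentiableAt ℝ (fun p : ℝ × ℝ => f p.1 p.2 k) (x, y)) :
    HasDerivAt (fun t => f x t k) (pdY f x y k) y := by
  cases nonempty_fintype a
  cases nonempty_fintype b
  have h := hasDerivAt_slice_snd hf
  rwa [← pdY_eq_of_hasDerivAt h] at h

theorem hasDerivAt_fst_pdY_of_contDiff_two [Fintype a] [Fintype b]
    (hf : ContDiff ℝ 2 fun p : ℝ × ℝ => f p.1 p.2 k) :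
    HasDerivAt (fun s => pdY f s y k) (pdY (pdX f) x y k) x := by
  set g := fun p : ℝ × ℝ => f p.1 p.2 k
  have hg : Differentiable ℝ g := hf.differentiable two_ne_zero
  have hg' : Differentiable ℝ (fderiv ℝ g) :=
    (hf.fderiv_right (m := 1) (by norm_num)).differentiable one_ne_zero
  have pdX_eq : ∀ t, pdX f x t k = fderiv ℝ g (x, t) (1, 0) := fun t =>
    pdX_eq_of_hasDerivAt (hasDerivAt_slice_fst (hg (x, t)))
  have pdY_eq : ∀ s, pdY f s y k = fderiv ℝ g (s, y) (0, 1) := fun s =>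
    pdY_eq_of_hasDerivAt (hasDerivAt_slice_snd (hg (s, y)))
  have pdY_pdX_eq : pdY (pdX f) x y k = fderiv ℝ (fderiv ℝ g) (x, y) (0, 1) (1, 0) := by
    apply pdY_eq_of_hasDerivAt
    simp only [pdX_eq]
    exact hasDerivAt_fderiv_slice_snd (hg' (x, y)) (1, 0)
  have symmetric : fderiv ℝ (fderiv ℝ g) (x, y) (0, 1) (1, 0)
      = fderiv ℝ (fderiv ℝ g) (x, y) (1, 0) (0, 1) :=
    hf.contDiffAt.isSymmSndFDerivAt (by simp) _ _
  rw [pdY_pdX_eq.trans symmetric]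
  simp only [pdY_eq]
  exact hasDerivAt_fderiv_slice_fst (hg' (x, y)) (0, 1)

end PartialDerivatives

section BinaryDarboux

variable {m n N : Type*} [Fintype m] [Fintype n] [Fintype N] [DecidableEq N]

/-- The binary Darboux transform `φ - θ (Ω⁻)⁻¹ χ⁻` of the potential `φ`. -/
noncomputable def darbouxTransform (θ : ℝ → ℝ → ℤ → Matrix m N ℝ) (χ : ℝ → ℝ → ℤ → Matrix N n ℝ)
    (Ω : ℝ → ℝ → ℤ → Matrix N N ℝ) (φ : ℝ → ℝ → ℤ → Matrix m n ℝ) :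
    ℝ → ℝ → ℤ → Matrix m n ℝ :=
  fun x y k => φ x y k - θ x y k * (Ω x y (k - 1))⁻¹ * χ x y (k - 1)

/-- The matrix `A = θ (Ω⁻)⁻¹ χ`; the factor `1 - A K` dresses the p2DTL defect from the left. -/
noncomputable def leftDressing (θ : ℝ → ℝ → ℤ → Matrix m N ℝ) (χ : ℝ → ℝ → ℤ → Matrix N n ℝ)
    (Ω : ℝ → ℝ → ℤ → Matrix N N ℝ) (x y : ℝ) (k : ℤ) : Matrix m n ℝ :=
  θ x y k * (Ω x y (k - 1))⁻¹ * χ x y k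

/-- The matrix `B = θ Ω⁻¹ χ`; the factor `1 + K B⁻` dresses the p2DTL defect from the right. -/
noncomputable def rightDressing (θ : ℝ → ℝ → ℤ → Matrix m N ℝ) (χ : ℝ → ℝ → ℤ → Matrix N n ℝ)
    (Ω : ℝ → ℝ → ℤ → Matrix N N ℝ) (x y : ℝ) (k : ℤ) : Matrix m n ℝ :=
  θ x y k * (Ω x y k)⁻¹ * χ x y k

/-- The left-hand side minus the right-hand side of the p2DTL_K equation. -/
noncomputable def p2DTLDefect (K : Matrix n m ℝ) (φ : ℝ → ℝ → ℤ → Matrix m n ℝ) (x y : ℝ) (k : ℤ) :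
    Matrix m n ℝ :=
  pdY (pdX φ) x y k - φ x y (k + 1) + 2 • φ x y k - φ x y (k - 1)
    - ((φ x y (k + 1) - φ x y k) * K * pdY φ x y k - pdY φ x y k * K * (φ x y k - φ x y (k - 1)))

theorem isP2DTL_iff_p2DTLDefect_eq_zero {m n : ℕ} {K : Matrix (Fin n) (Fin m) ℝ}
    {φ : ℝ → ℝ → ℤ → Matrix (Fin m) (Fin n) ℝ} :
    IsP2DTL K φ ↔ ∀ x y k, p2DTLDefect K φ x y k = 0 := by
  simp only [IsP2DTL, p2DTLDefect, sub_eq_zero]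

theorem p2DTLDefect_eq_zeroCurvature [DecidableEq m] [DecidableEq n] (K : Matrix n m ℝ)
    (φ : ℝ → ℝ → ℤ → Matrix m n ℝ) (x y : ℝ) (k : ℤ) :
    p2DTLDefect K φ x y k
      = pdY (pdX φ) x y k - (φ x y (k + 1) - φ x y k) * (1 + K * pdY φ x y k)
        + (1 + pdY φ x y k * K) * (φ x y k - φ x y (k - 1)) := by
  simp only [p2DTLDefect, Matrix.mul_add, Matrix.add_mul, Matrix.mul_one, Matrix.one_mul,
    Matrix.mul_assoc]
  abel

/-- Data for a binary Darboux transformation of the potential `φ`: eigenfunctions `θ` of the linear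
system, eigenfunctions `χ` of the adjoint system and an invertible Darboux potential `Ω`, all
entrywise of class `C²`. It is not assumed that `φ` solves the p2DTL_K equation. -/
structure IsBinaryDarbouxDatum (K : Matrix n m ℝ) (φ : ℝ → ℝ → ℤ → Matrix m n ℝ)
    (θ : ℝ → ℝ → ℤ → Matrix m N ℝ) (χ : ℝ → ℝ → ℤ → Matrix N n ℝ)
    (Ω : ℝ → ℝ → ℤ → Matrix N N ℝ) : Prop where
  contDiff_φ_apply : ∀ k i j, ContDiff ℝ 2 fun p : ℝ × ℝ => φ p.1 p.2 k i j
  contDiff_θ_apply : ∀ k i j, ContDiff ℝ 2 fun p : ℝ × ℝ => θ p.1 p.2 k i j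
  contDiff_χ_apply : ∀ k i j, ContDiff ℝ 2 fun p : ℝ × ℝ => χ p.1 p.2 k i j
  contDiff_Ω_apply : ∀ k i j, ContDiff ℝ 2 fun p : ℝ × ℝ => Ω p.1 p.2 k i j
  pdX_θ : ∀ x y k, pdX θ x y k
    = θ x y (k + 1) - θ x y k + (φ x y (k + 1) - φ x y k) * K * θ x y k
  pdY_θ : ∀ x y k, pdY θ x y k
    = θ x y k - θ x y (k - 1) - pdY φ x y k * K * θ x y (k - 1)
  pdX_χ : ∀ x y k, pdX χ x y k
    = χ x y k - χ x y (k - 1) - χ x y k * K * (φ x y (k + 1) - φ x y k)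
  pdY_χ : ∀ x y k, pdY χ x y k
    = χ x y (k + 1) - χ x y k + χ x y (k + 1) * K * pdY φ x y (k + 1)
  Ω_sub_Ω_pred : ∀ x y k, Ω x y k - Ω x y (k - 1) = -(χ x y k * K * θ x y k)
  pdX_Ω : ∀ x y k, pdX Ω x y k = -(χ x y k * K * θ x y (k + 1))
  pdY_Ω : ∀ x y k, pdY Ω x y k
    = -(χ x y (k + 1) * K * θ x y k) - χ x y (k + 1) * K * pdY φ x y (k + 1) * K * θ x y k
  isUnit_Ω : ∀ x y k, IsUnit (Ω x y k)

namespace IsBinaryDarbouxDatum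

open scoped Matrix.Norms.Operator

variable {K : Matrix n m ℝ} {φ : ℝ → ℝ → ℤ → Matrix m n ℝ} {θ : ℝ → ℝ → ℤ → Matrix m N ℝ}
  {χ : ℝ → ℝ → ℤ → Matrix N n ℝ} {Ω : ℝ → ℝ → ℤ → Matrix N N ℝ}

theorem contDiff_φ (h : IsBinaryDarbouxDatum K φ θ χ Ω) (k : ℤ) :
    ContDiff ℝ 2 fun p : ℝ × ℝ => φ p.1 p.2 k :=
  contDiff_matrix_of_entries (h.contDiff_φ_apply k)

theorem contDiff_θ (h : IsBinaryDarbouxDatum K φ θ χ Ω) (k : ℤ) :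
    ContDiff ℝ 2 fun p : ℝ × ℝ => θ p.1 p.2 k :=
  contDiff_matrix_of_entries (h.contDiff_θ_apply k)

theorem contDiff_χ (h : IsBinaryDarbouxDatum K φ θ χ Ω) (k : ℤ) :
    ContDiff ℝ 2 fun p : ℝ × ℝ => χ p.1 p.2 k :=
  contDiff_matrix_of_entries (h.contDiff_χ_apply k)

theorem contDiff_Ω (h : IsBinaryDarbouxDatum K φ θ χ Ω) (k : ℤ) :
    ContDiff ℝ 2 fun p : ℝ × ℝ => Ω p.1 p.2 k :=
  contDiff_matrix_of_entries (h.contDiff_Ω_apply k)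

theorem contDiff_darbouxTransform (h : IsBinaryDarbouxDatum K φ θ χ Ω) (k : ℤ) :
    ContDiff ℝ 2 fun p : ℝ × ℝ => darbouxTransform θ χ Ω φ p.1 p.2 k :=
  (h.contDiff_φ k).sub <| contDiff_matrix_mul
    (contDiff_matrix_mul (h.contDiff_θ k)
      (contDiff_matrix_inv (h.contDiff_Ω (k - 1)) fun p => h.isUnit_Ω p.1 p.2 (k - 1)))
    (h.contDiff_χ (k - 1))

theorem inv_Ω_sub_inv_Ω_pred (h : IsBinaryDarbouxDatum K φ θ χ Ω) (x y : ℝ) (k : ℤ) :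
    (Ω x y k)⁻¹ - (Ω x y (k - 1))⁻¹
      = (Ω x y k)⁻¹ * χ x y k * K * θ x y k * (Ω x y (k - 1))⁻¹ := by
  rw [Matrix.inv_sub_inv (iff_of_true (h.isUnit_Ω x y k) (h.isUnit_Ω x y (k - 1))),
    ← neg_sub (Ω x y k), h.Ω_sub_Ω_pred, neg_neg]
  simp only [Matrix.mul_assoc]

theorem θ_succ_mul_inv_Ω_pred_mul_χ (h : IsBinaryDarbouxDatum K φ θ χ Ω) (x y : ℝ) (k : ℤ) :
    θ x y (k + 1) * (Ω x y (k - 1))⁻¹ * χ x y k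
      = θ x y (k + 1) * (Ω x y k)⁻¹ * χ x y k
        - θ x y (k + 1) * (Ω x y k)⁻¹ * χ x y k * K * leftDressing θ χ Ω x y k := by
  rw [← sub_sub_self (Ω x y k)⁻¹ (Ω x y (k - 1))⁻¹, h.inv_Ω_sub_inv_Ω_pred]
  simp only [leftDressing, Matrix.mul_sub, Matrix.sub_mul, Matrix.mul_assoc]

theorem θ_mul_inv_Ω_mul_χ_pred (h : IsBinaryDarbouxDatum K φ θ χ Ω) (x y : ℝ) (k : ℤ) :
    θ x y k * (Ω x y k)⁻¹ * χ x y (k - 1)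
      = θ x y k * (Ω x y (k - 1))⁻¹ * χ x y (k - 1)
        + rightDressing θ χ Ω x y k * K * (θ x y k * (Ω x y (k - 1))⁻¹ * χ x y (k - 1)) := by
  rw [sub_eq_iff_eq_add'.1 (h.inv_Ω_sub_inv_Ω_pred x y k)]
  simp only [rightDressing, Matrix.mul_add, Matrix.add_mul, Matrix.mul_assoc]

theorem hasDerivAt_fst_leftDressing [DecidableEq m] [DecidableEq n]
    (h : IsBinaryDarbouxDatum K φ θ χ Ω) (x y : ℝ) (k : ℤ) :
    HasDerivAt (fun s => leftDressing θ χ Ω s y k)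
      ((1 - leftDressing θ χ Ω x y k * K) * (φ x y (k + 1) - φ x y k)
        - (darbouxTransform θ χ Ω φ x y (k + 1) - darbouxTransform θ χ Ω φ x y k)
          * (1 - K * leftDressing θ χ Ω x y k)) x := by
  have product_rule := hasDerivAt_matrix_mul_inv_mul
    (hasDerivAt_pdX ((h.contDiff_θ k).differentiable two_ne_zero (x, y)))
    (hasDerivAt_pdX ((h.contDiff_Ω (k - 1)).differentiable two_ne_zero (x, y)))
    (hasDerivAt_pdX ((h.contDiff_χ k).differentiable two_ne_zero (x, y)))
    (h.isUnit_Ω x y (k - 1))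
  refine product_rule.congr_deriv ?_
  have resolvent := h.θ_succ_mul_inv_Ω_pred_mul_χ x y k
  simp only [h.pdX_θ, h.pdX_Ω, h.pdX_χ, darbouxTransform, leftDressing, Matrix.add_mul,
    Matrix.mul_sub, Matrix.sub_mul, Matrix.mul_neg, Matrix.neg_mul, Matrix.mul_one, Matrix.one_mul,
    Matrix.mul_assoc, sub_add_cancel, add_sub_cancel_right] at resolvent ⊢
  rw [resolvent]
  abel

theorem hasDerivAt_fst_rightDressing [DecidableEq m] [DecidableEq n]
    (h : IsBinaryDarbouxDatum K φ θ χ Ω) (x y : ℝ) (k : ℤ) :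
    HasDerivAt (fun s => rightDressing θ χ Ω s y k)
      ((φ x y (k + 1) - φ x y k) * (1 + K * rightDressing θ χ Ω x y k)
        - (1 + rightDressing θ χ Ω x y k * K)
          * (darbouxTransform θ χ Ω φ x y (k + 1) - darbouxTransform θ χ Ω φ x y k)) x := by
  have product_rule := hasDerivAt_matrix_mul_inv_mul
    (hasDerivAt_pdX ((h.contDiff_θ k).differentiable two_ne_zero (x, y)))
    (hasDerivAt_pdX ((h.contDiff_Ω k).differentiable two_ne_zero (x, y)))
    (hasDerivAt_pdX ((h.contDiff_χ k).differentiable two_ne_zero (x, y)))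
    (h.isUnit_Ω x y k)
  refine product_rule.congr_deriv ?_
  have resolvent := h.θ_mul_inv_Ω_mul_χ_pred x y k
  simp only [h.pdX_θ, h.pdX_Ω, h.pdX_χ, darbouxTransform, rightDressing, Matrix.mul_add,
    Matrix.add_mul, Matrix.mul_sub, Matrix.sub_mul, Matrix.mul_neg, Matrix.neg_mul, Matrix.mul_one,
    Matrix.one_mul, Matrix.mul_assoc, add_sub_cancel_right] at resolvent ⊢
  rw [resolvent]
  abel

theorem pdY_darbouxTransform [DecidableEq m] [DecidableEq n]
    (h : IsBinaryDarbouxDatum K φ θ χ Ω) (x y : ℝ) (k : ℤ) :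
    pdY (darbouxTransform θ χ Ω φ) x y k
      = (1 - leftDressing θ χ Ω x y k * K) * pdY φ x y k
          * (1 + K * rightDressing θ χ Ω x y (k - 1))
        - leftDressing θ χ Ω x y k
        + (1 - leftDressing θ χ Ω x y k * K) * rightDressing θ χ Ω x y (k - 1) := by
  have product_rule := hasDerivAt_matrix_mul_inv_mul
    (hasDerivAt_pdY ((h.contDiff_θ k).differentiable two_ne_zero (x, y)))
    (hasDerivAt_pdY ((h.contDiff_Ω (k - 1)).differentiable two_ne_zero (x, y)))
    (hasDerivAt_pdY ((h.contDiff_χ (k - 1)).differentiable two_ne_zero (x, y)))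
    (h.isUnit_Ω x y (k - 1))
  have seed := hasDerivAt_pdY ((h.contDiff_φ k).differentiable two_ne_zero (x, y))
  refine (pdY_eq_of_hasDerivAt (seed.sub product_rule)).trans ?_
  simp only [h.pdY_θ, h.pdY_Ω, h.pdY_χ, leftDressing, rightDressing, Matrix.mul_add,
    Matrix.mul_sub, Matrix.sub_mul, Matrix.mul_neg, Matrix.neg_mul, Matrix.mul_one, Matrix.one_mul,
    Matrix.mul_assoc, sub_add_cancel]
  abel

theorem one_add_mul_pdY_darbouxTransform [DecidableEq n]
    (h : IsBinaryDarbouxDatum K φ θ χ Ω) (x y : ℝ) (k : ℤ) :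
    1 + K * pdY (darbouxTransform θ χ Ω φ) x y k
      = (1 - K * leftDressing θ χ Ω x y k) * (1 + K * pdY φ x y k)
        * (1 + K * rightDressing θ χ Ω x y (k - 1)) := by
  classical
  rw [h.pdY_darbouxTransform]
  simp only [Matrix.mul_add, Matrix.add_mul, Matrix.mul_sub, Matrix.sub_mul, Matrix.mul_one,
    Matrix.one_mul, Matrix.mul_assoc]
  abel

theorem one_add_pdY_darbouxTransform_mul [DecidableEq m]
    (h : IsBinaryDarbouxDatum K φ θ χ Ω) (x y : ℝ) (k : ℤ) :
    1 + pdY (darbouxTransform θ χ Ω φ) x y k * K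
      = (1 - leftDressing θ χ Ω x y k * K) * (1 + pdY φ x y k * K)
        * (1 + rightDressing θ χ Ω x y (k - 1) * K) := by
  classical
  rw [h.pdY_darbouxTransform]
  simp only [Matrix.mul_add, Matrix.add_mul, Matrix.sub_mul, Matrix.mul_one, Matrix.one_mul,
    Matrix.mul_assoc]
  abel

theorem pdY_pdX_darbouxTransform [DecidableEq m] [DecidableEq n]
    (h : IsBinaryDarbouxDatum K φ θ χ Ω) (x y : ℝ) (k : ℤ)
    {A' B' : Matrix m n ℝ} (hA : HasDerivAt (fun s => leftDressing θ χ Ω s y k) A' x)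
    (hB : HasDerivAt (fun s => rightDressing θ χ Ω s y (k - 1)) B' x) :
    pdY (pdX (darbouxTransform θ χ Ω φ)) x y k
      = (1 - leftDressing θ χ Ω x y k * K) * pdY (pdX φ) x y k
          * (1 + K * rightDressing θ χ Ω x y (k - 1))
        - A' * (1 + K * pdY φ x y k) * (1 + K * rightDressing θ χ Ω x y (k - 1))
        + (1 - leftDressing θ χ Ω x y k * K) * (1 + pdY φ x y k * K) * B' := by
  have left := (hasDerivAt_matrix_mul_const hA K).const_sub 1
  have right := (hasDerivAt_matrix_const_mul K hB).const_add 1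
  have seed := hasDerivAt_fst_pdY_of_contDiff_two (x := x) (y := y) (h.contDiff_φ k)
  have transform :=
    hasDerivAt_fst_pdY_of_contDiff_two (x := x) (y := y) (h.contDiff_darbouxTransform k)
  simp only [h.pdY_darbouxTransform] at transform
  rw [transform.unique (((hasDerivAt_matrix_mul (hasDerivAt_matrix_mul left seed) right).sub
    hA).add (hasDerivAt_matrix_mul left hB))]
  simp only [Matrix.mul_add, Matrix.add_mul, Matrix.sub_mul, Matrix.neg_mul, Matrix.mul_one,
    Matrix.one_mul, Matrix.mul_assoc]
  abel

theorem p2DTLDefect_darbouxTransform [DecidableEq m] [DecidableEq n]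
    (h : IsBinaryDarbouxDatum K φ θ χ Ω) (x y : ℝ) (k : ℤ) :
    p2DTLDefect K (darbouxTransform θ χ Ω φ) x y k
      = (1 - leftDressing θ χ Ω x y k * K) * p2DTLDefect K φ x y k
        * (1 + K * rightDressing θ χ Ω x y (k - 1)) := by
  rw [p2DTLDefect_eq_zeroCurvature, p2DTLDefect_eq_zeroCurvature,
    h.pdY_pdX_darbouxTransform x y k (h.hasDerivAt_fst_leftDressing x y k)
      (h.hasDerivAt_fst_rightDressing x y (k - 1)),
    h.one_add_mul_pdY_darbouxTransform, h.one_add_pdY_darbouxTransform_mul]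
  simp only [sub_add_cancel, Matrix.mul_add, Matrix.add_mul, Matrix.mul_sub, Matrix.sub_mul,
    Matrix.mul_one, Matrix.one_mul, Matrix.mul_assoc]
  abel

end IsBinaryDarbouxDatum

end BinaryDarboux

/-- the binary Darboux transformation produces a new solution of p2DTL_K. -/
theorem binary_darboux_p2DTL
    (m n N : ℕ) (hm : 0 < m) (hn : 0 < n) (hN : 0 < N)
    (K : Matrix (Fin n) (Fin m) ℝ)
    (φ0 : ℝ → ℝ → ℤ → Matrix (Fin m) (Fin n) ℝ)
    (θ : ℝ → ℝ → ℤ → Matrix (Fin m) (Fin N) ℝ)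
    (χ : ℝ → ℝ → ℤ → Matrix (Fin N) (Fin n) ℝ)
    (Ω : ℝ → ℝ → ℤ → Matrix (Fin N) (Fin N) ℝ)
    -- smoothness (twice continuous differentiability in (x,y), entrywise)
    (hφ0smooth : ∀ (k : ℤ) (i : Fin m) (j : Fin n),
      ContDiff ℝ 2 (fun pt : ℝ × ℝ => φ0 pt.1 pt.2 k i j))
    (hθsmooth : ∀ (k : ℤ) (i : Fin m) (j : Fin N),
      ContDiff ℝ 2 (fun pt : ℝ × ℝ => θ pt.1 pt.2 k i j))
    (hχsmooth : ∀ (k : ℤ) (i : Fin N) (j : Fin n),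
      ContDiff ℝ 2 (fun pt : ℝ × ℝ => χ pt.1 pt.2 k i j))
    (hΩsmooth : ∀ (k : ℤ) (i : Fin N) (j : Fin N),
      ContDiff ℝ 2 (fun pt : ℝ × ℝ => Ω pt.1 pt.2 k i j))
    -- the seed solution
    (hφ0 : IsP2DTL K φ0)
    -- the linear system for θ
    (hθx : ∀ (x y : ℝ) (k : ℤ), pdX θ x y k
      = θ x y (k + 1) - θ x y k + (φ0 x y (k + 1) - φ0 x y k) * K * θ x y k)
    (hθy : ∀ (x y : ℝ) (k : ℤ), pdY θ x y k
      = θ x y k - θ x y (k - 1) - pdY φ0 x y k * K * θ x y (k - 1))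
    -- the adjoint linear system for χ
    (hχx : ∀ (x y : ℝ) (k : ℤ), pdX χ x y k
      = χ x y k - χ x y (k - 1) - χ x y k * K * (φ0 x y (k + 1) - φ0 x y k))
    (hχy : ∀ (x y : ℝ) (k : ℤ), pdY χ x y k
      = χ x y (k + 1) - χ x y k + χ x y (k + 1) * K * pdY φ0 x y (k + 1))
    -- the equations for the Darboux potential Ω
    (hΩshift : ∀ (x y : ℝ) (k : ℤ), Ω x y k - Ω x y (k - 1) = -(χ x y k * K * θ x y k))
    (hΩx : ∀ (x y : ℝ) (k : ℤ), pdX Ω x y k = -(χ x y k * K * θ x y (k + 1)))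
    (hΩy : ∀ (x y : ℝ) (k : ℤ), pdY Ω x y k
      = -(χ x y (k + 1) * K * θ x y k)
        - χ x y (k + 1) * K * pdY φ0 x y (k + 1) * K * θ x y k)
    -- invertibility of Ω
    (hΩinv : ∀ (x y : ℝ) (k : ℤ), IsUnit (Ω x y k)) :
    IsP2DTL K (fun x y k => φ0 x y k - θ x y k * (Ω x y (k - 1))⁻¹ * χ x y (k - 1)) := by
  have datum : IsBinaryDarbouxDatum K φ0 θ χ Ω :=
    ⟨hφ0smooth, hθsmooth, hχsmooth, hΩsmooth, hθx, hθy, hχx, hχy, hΩshift, hΩx, hΩy, hΩinv⟩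
  refine isP2DTL_iff_p2DTLDefect_eq_zero.2 fun x y k => ?_
  calc p2DTLDefect K (darbouxTransform θ χ Ω φ0) x y k
      = (1 - leftDressing θ χ Ω x y k * K) * p2DTLDefect K φ0 x y k
        * (1 + K * rightDressing θ χ Ω x y (k - 1)) := datum.p2DTLDefect_darbouxTransform x y k
    _ = 0 := by
      rw [isP2DTL_iff_p2DTLDefect_eq_zero.1 hφ0 x y k, Matrix.mul_zero, Matrix.zero_mul]
end

section
/- Let N be a positive integer, p_1,…,p_N, q_1,…,q_N positive reals with p_j ≠ q_i for all i, j, ξ_1,…,ξ_N ∈ ℝ^m column vectors, η_1,…,η_N ∈ ℝ^n row vectors (viewed as 1×n), K an n×m real matrix, and κ_{ij} = η_i K ξ_j. For p > 0 define ϑ(p)(x,y,k) = p x − p^{-1} y + k log p, and ϑ(p)⁺ means k replaced by k+1. Set ϑ_{i,1} = ϑ(p_i)⁺, ϑ_{i,2} = ϑ(q_i), and for I = (a_1,…,a_N) ∈ {1,2}^N set ϑ_I = Σ_i ϑ_{i,a_i}. Let Ω be the N×N matrix with entries Ω_{ij} = δ_{ij} + (κ_{ij}(q_j−p_j)/(q_i−p_j))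 e^{ϑ(p_j)⁺ − ϑ(q_i)}, let P = diag(p_1,…,p_N), Q = diag(q_1,…,q_N), θ_1 = (ξ_1,…,ξ_N)(Q−P) (an m×N matrix), χ_1 the N×n matrix with rows η_1,…,η_N, and define τ = e^{ϑ_𝟐} det Ω and F = −e^{ϑ_𝟐} θ_1 diag(e^{ϑ(p_i)⁺}) adj(Ω) diag(e^{−ϑ(q_i)}) χ_1, where 𝟐 = (2,…,2) and adj denotes the adjugate. Then there exist real constants μ_I and constant m×n real matrices M_I, for I ∈ {1,2}^N, independent of (x,y,k), such that for all (x,y,k) ∈ ℝ²×ℤ: τ = Σ_{I∈{1,2}^N} μ_I e^{ϑ_I} and F = Σ_{I∈{1,2}^N} M_I e^{ϑ_I}, with μ_𝟐 = 1 and M_𝟐 = 0. -/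
open Matrix

/-- The phase `ϑ(r)(x,y,k) = r x − r⁻¹ y + k log r`. -/
noncomputable def phase (r x y : ℝ) (k : ℤ) : ℝ :=
  r * x - r⁻¹ * y + (k : ℝ) * Real.log r

/-- `ϑ_I = Σᵢ ϑ_{i,aᵢ}`, where `ϑ_{i,1} = ϑ(pᵢ)⁺` (encoded by `I i = 0`) and
`ϑ_{i,2} = ϑ(qᵢ)` (encoded by `I i = 1`). -/
noncomputable def phaseI {N : ℕ} (p q : Fin N → ℝ) (I : Fin N → Fin 2) (x y : ℝ) (k : ℤ) : ℝ :=
  ∑ i, if I i = 0 then phase (p i) x y (k + 1) else phase (q i) x y k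

/-- The matrix `Ω` with entries
`Ω_{ij} = δ_{ij} + (κ_{ij}(qⱼ−pⱼ)/(qᵢ−pⱼ)) e^{ϑ(pⱼ)⁺ − ϑ(qᵢ)}`, where `κ = η K ξ`. -/
noncomputable def OmegaSol {m n N : ℕ} (K : Matrix (Fin n) (Fin m) ℝ) (p q : Fin N → ℝ)
    (ξ : Matrix (Fin m) (Fin N) ℝ) (η : Matrix (Fin N) (Fin n) ℝ) (x y : ℝ) (k : ℤ) :
    Matrix (Fin N) (Fin N) ℝ :=
  Matrix.of fun i j =>
    (if i = j then (1 : ℝ) else 0) +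
      (η * K * ξ) i j * (q j - p j) / (q i - p j) *
        Real.exp (phase (p j) x y (k + 1) - phase (q i) x y k)

/-- The tau function `τ = e^{ϑ_𝟐} det Ω`. -/
noncomputable def tauSol {m n N : ℕ} (K : Matrix (Fin n) (Fin m) ℝ) (p q : Fin N → ℝ)
    (ξ : Matrix (Fin m) (Fin N) ℝ) (η : Matrix (Fin N) (Fin n) ℝ) (x y : ℝ) (k : ℤ) : ℝ :=
  Real.exp (phaseI p q (fun _ => 1) x y k) * (OmegaSol K p q ξ η x y k).det

/-- `F = −e^{ϑ_𝟐} θ₁ e^{ϑ(P)⁺} adj(Ω) e^{−ϑ(Q)} χ₁`, where `θ₁ = (ξ₁,…,ξ_N)(Q−P)` and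
`χ₁` has rows `η₁,…,η_N`. -/
noncomputable def FSol {m n N : ℕ} (K : Matrix (Fin n) (Fin m) ℝ) (p q : Fin N → ℝ)
    (ξ : Matrix (Fin m) (Fin N) ℝ) (η : Matrix (Fin N) (Fin n) ℝ) (x y : ℝ) (k : ℤ) :
    Matrix (Fin m) (Fin n) ℝ :=
  -(Real.exp (phaseI p q (fun _ => 1) x y k)) •
    (ξ * Matrix.diagonal (fun i => q i - p i) *
      Matrix.diagonal (fun i => Real.exp (phase (p i) x y (k + 1))) *
      (OmegaSol K p q ξ η x y k).adjugate *
      Matrix.diagonal (fun i => Real.exp (-phase (q i) x y k)) * η)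

/-!
Put `C_{ij} = κ_{ij}(qⱼ−pⱼ)/(qᵢ−pⱼ)` and `W = e^{ϑ(Q)} Ω = e^{ϑ(Q)} + C e^{ϑ(P)⁺}`. Then
`τ = det W`, and `F = −θ₁ e^{ϑ(P)⁺} adj(W) χ₁` because `adj(W) = e^{ϑ_𝟐} adj(Ω) e^{−ϑ(Q)}`.
Multilinearity expands `det W` over subsets `S` of the indices; the coefficient of the monomial
with factors `e^{ϑ(pᵢ)⁺}` for `i ∈ S` and `e^{ϑ(qᵢ)}` for `i ∉ S` is the principal minor `det C_S`.
Differentiating this expansion in the entries of `C` expands `e^{ϑ(P)⁺} adj(W)`, with coefficients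
`adj(C_S)`, which vanish for `S = ∅`.
-/

section PrincipalMinors

variable {ι R : Type*} [DecidableEq ι] [CommRing R]

/-- The principal minor `det A_S` of `A` on the rows and columns in `S`; the coefficients `μ_I` are
of this form. -/
def principalMinor (A : Matrix ι ι R) (S : Finset ι) : R :=
  (A.submatrix (↑) (↑) : Matrix S S R).det

/-- The adjugate of the principal submatrix `A_S`, extended by zero to all of `ι`; its `(i, j)`
entry is the derivative of `det A_S` in the entry `A j i`. It gives the coefficients `M_I`. -/
def principalAdjugate (A : Matrix ι ι R) (S : Finset ι) : Matrix ι ι R :=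
  Matrix.of fun i j =>
    if h : i ∈ S ∧ j ∈ S then
      (A.submatrix (↑) (↑) : Matrix S S R).adjugate ⟨i, h.1⟩ ⟨j, h.2⟩
    else 0

@[simp]
lemma principalMinor_empty (A : Matrix ι ι R) : principalMinor A ∅ = 1 :=
  Matrix.det_isEmpty

@[simp]
lemma principalAdjugate_empty (A : Matrix ι ι R) : principalAdjugate A ∅ = 0 := by
  ext i j
  simp [principalAdjugate]

lemma principalMinor_transpose (A : Matrix ι ι R) (S : Finset ι) :
    principalMinor Aᵀ S = principalMinor A S := by
  rw [principalMinor, ← transpose_submatrix, det_transpose, principalMinor]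

lemma det_add_single [Fintype ι] (A : Matrix ι ι R) (i j : ι) (c : R) :
    (A + single j i c).det = A.det + c * A.adjugate i j := by
  have row_update : A + single j i c = A.updateRow j (A j + c • Pi.single i 1) := by
    ext a b
    rw [updateRow_apply, Matrix.add_apply, single_apply]
    split_ifs <;> simp_all
  rw [row_update, det_updateRow_add, det_updateRow_smul, updateRow_eq_self, adjugate_apply]

lemma principalMinor_add_single (A : Matrix ι ι R) (S : Finset ι) (i j : ι) (c : R) :
    principalMinor (A + single j i c) S = principalMinor A S + c * principalAdjugate A S i j := by
  by_cases h : i ∈ S ∧ j ∈ S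
  · have submatrix_add : ((A + single j i c).submatrix (↑) (↑) : Matrix S S R) =
        A.submatrix (↑) (↑) + single ⟨j, h.2⟩ ⟨i, h.1⟩ c := by
      ext a b
      simp [single_apply, Subtype.ext_iff]
    simp only [principalMinor, submatrix_add, det_add_single, principalAdjugate, of_apply,
      dif_pos h]
  · have submatrix_eq : ((A + single j i c).submatrix (↑) (↑) : Matrix S S R) =
        A.submatrix (↑) (↑) := by
      ext a b
      have : ¬(j = a ∧ i = b) := fun hab => h ⟨hab.2 ▸ b.2, hab.1 ▸ a.2⟩
      simp [this]
    simp [principalMinor, submatrix_eq, principalAdjugate, h]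

variable [Fintype ι]

lemma det_diagonal_add_diagonal_mul (d e : ι → R) (A : Matrix ι ι R) :
    (diagonal d + diagonal e * A).det =
      ∑ S : Finset ι, principalMinor A S * ∏ i, S.piecewise e d i := by
  have rows : diagonal d + diagonal e * A =
      (fun i => e i • A.row i) + fun i => d i • (1 : Matrix ι ι R).row i := by
    ext i j
    simp [diagonal_apply, one_apply, add_comm]
  have piecewise_rows (S : Finset ι) :
      S.piecewise (fun i => e i • A.row i) (fun i => d i • (1 : Matrix ι ι R).row i) =
        fun i => S.piecewise e d i • S.piecewise A.row (1 : Matrix ι ι R).row i := by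
    ext i : 1
    by_cases h : i ∈ S <;> simp [h]
  calc (diagonal d + diagonal e * A).det
      = ∑ S : Finset ι, detRowAlternating
          (S.piecewise (fun i => e i • A.row i) fun i => d i • (1 : Matrix ι ι R).row i) := by
        rw [rows]
        exact detRowAlternating.map_add_univ _ _
    _ = ∑ S : Finset ι, principalMinor A S * ∏ i, S.piecewise e d i := by
        refine Finset.sum_congr rfl fun S _ => ?_
        rw [piecewise_rows, AlternatingMap.map_smul_univ, smul_eq_mul, mul_comm]
        congr 1
        exact det_piecewise_one_eq_submatrix_det A S

lemma det_diagonal_add_mul_diagonal (d e : ι → R) (A : Matrix ι ι R) :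
    (diagonal d + A * diagonal e).det =
      ∑ S : Finset ι, principalMinor A S * ∏ i, S.piecewise e d i := by
  rw [← det_transpose, transpose_add, transpose_mul, diagonal_transpose, diagonal_transpose,
    det_diagonal_add_diagonal_mul]
  simp only [principalMinor_transpose]

lemma diagonal_mul_adjugate_diagonal_add_mul_diagonal (d e : ι → R) (A : Matrix ι ι R) :
    diagonal e * (diagonal d + A * diagonal e).adjugate =
      ∑ S : Finset ι, (∏ i, S.piecewise e d i) • principalAdjugate A S := by
  ext i j
  have perturb : diagonal d + (A + single j i 1) * diagonal e =
      diagonal d + A * diagonal e + single j i (e i) := by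
    ext a b
    by_cases h : j = a ∧ i = b <;> simp [h, add_mul, add_assoc]
  have expand := det_diagonal_add_mul_diagonal d e (A + single j i 1)
  rw [perturb, det_add_single, det_diagonal_add_mul_diagonal] at expand
  simp only [principalMinor_add_single, one_mul, add_mul, Finset.sum_add_distrib,
    add_right_inj] at expand
  simpa [diagonal_mul, Matrix.sum_apply, mul_comm] using expand

end PrincipalMinors

section ZeroIndices

variable {ι : Type*} [Fintype ι]

/-- The indices `i` with `I i = 0`, that is, those where `ϑ_I` picks `ϑ(pᵢ)⁺`. -/
def zeroIndices (I : ι → Fin 2) : Finset ι := {i | I i = 0}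

lemma mem_zeroIndices {I : ι → Fin 2} {i : ι} : i ∈ zeroIndices I ↔ I i = 0 := by
  simp [zeroIndices]

lemma zeroIndices_const_one : zeroIndices (fun _ : ι => 1) = ∅ := by
  simp [zeroIndices]

lemma zeroIndices_bijective :
    Function.Bijective (zeroIndices : (ι → Fin 2) → Finset ι) := by
  classical
  refine ⟨fun I J h => funext fun i => ?_, fun S => ⟨fun i => if i ∈ S then 0 else 1, ?_⟩⟩
  · have : I i = 0 ↔ J i = 0 := by rw [← mem_zeroIndices, h, mem_zeroIndices]
    lia
  · ext i
    simp [mem_zeroIndices]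

end ZeroIndices

section Soliton

variable {m n N : ℕ} (K : Matrix (Fin n) (Fin m) ℝ) (p q : Fin N → ℝ)
  (ξ : Matrix (Fin m) (Fin N) ℝ) (η : Matrix (Fin N) (Fin n) ℝ) (x y : ℝ) (k : ℤ)

/-- The vector `(e^{ϑ(r₁)}, …, e^{ϑ(r_N)})`; its diagonal matrix is `e^{ϑ(R)}`. -/
noncomputable def expPhase (r : Fin N → ℝ) (x y : ℝ) (k : ℤ) : Fin N → ℝ :=
  fun i => Real.exp (phase (r i) x y k)

/-- The constant matrix `κ_{ij}(qⱼ−pⱼ)/(qᵢ−pⱼ)` of coefficients of the exponentials in `Ω`. -/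
noncomputable def omegaCoeff : Matrix (Fin N) (Fin N) ℝ :=
  Matrix.of fun i j => (η * K * ξ) i j * (q j - p j) / (q i - p j)

lemma exp_phaseI (I : Fin N → Fin 2) :
    Real.exp (phaseI p q I x y k) =
      ∏ i, (zeroIndices I).piecewise (expPhase p x y (k + 1)) (expPhase q x y k) i := by
  rw [phaseI, Real.exp_sum]
  refine Finset.prod_congr rfl fun i _ => ?_
  simp [Finset.piecewise, mem_zeroIndices, expPhase, apply_ite Real.exp]

lemma exp_phaseI_const_one :
    Real.exp (phaseI p q (fun _ => 1) x y k) = ∏ i, expPhase q x y k i := by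
  simp [exp_phaseI, zeroIndices_const_one]

lemma diagonal_expPhase_mul_OmegaSol :
    diagonal (expPhase q x y k) * OmegaSol K p q ξ η x y k =
      diagonal (expPhase q x y k) +
        omegaCoeff K p q ξ η * diagonal (expPhase p x y (k + 1)) := by
  ext i j
  have cancel : expPhase q x y k i * Real.exp (phase (p j) x y (k + 1) - phase (q i) x y k) =
      expPhase p x y (k + 1) j := by
    rw [expPhase, expPhase, ← Real.exp_add, add_sub_cancel]
  rw [diagonal_mul, Matrix.add_apply, mul_diagonal, diagonal_apply, ← cancel, OmegaSol, omegaCoeff,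
    of_apply, of_apply]
  split_ifs <;> ring

lemma adjugate_diagonal_expPhase :
    (diagonal (expPhase q x y k)).adjugate =
      (∏ i, expPhase q x y k i) • diagonal fun i => Real.exp (-phase (q i) x y k) := by
  rw [adjugate_diagonal, ← diagonal_smul]
  congr 1
  ext i
  have cancel : expPhase q x y k i * Real.exp (-phase (q i) x y k) = 1 := by
    rw [expPhase, ← Real.exp_add, add_neg_cancel, Real.exp_zero]
  rw [Pi.smul_apply, smul_eq_mul, ← Finset.mul_prod_erase _ _ (Finset.mem_univ i),
    mul_right_comm, cancel, one_mul]

lemma tauSol_eq_det :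
    tauSol K p q ξ η x y k =
      (diagonal (expPhase q x y k) +
        omegaCoeff K p q ξ η * diagonal (expPhase p x y (k + 1))).det := by
  rw [← diagonal_expPhase_mul_OmegaSol, det_mul, det_diagonal, tauSol, exp_phaseI_const_one]

lemma FSol_eq_mul_adjugate :
    FSol K p q ξ η x y k =
      -(ξ * diagonal (q - p) * (diagonal (expPhase p x y (k + 1)) *
        (diagonal (expPhase q x y k) +
          omegaCoeff K p q ξ η * diagonal (expPhase p x y (k + 1))).adjugate) * η) := by
  rw [← diagonal_expPhase_mul_OmegaSol, adjugate_mul_distrib, adjugate_diagonal_expPhase,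
    ← exp_phaseI_const_one p]
  simp only [FSol, Matrix.mul_smul, Matrix.smul_mul, neg_smul, Matrix.mul_assoc]
  rfl

lemma tauSol_eq_sum :
    tauSol K p q ξ η x y k =
      ∑ I : Fin N → Fin 2, principalMinor (omegaCoeff K p q ξ η) (zeroIndices I) *
        Real.exp (phaseI p q I x y k) := by
  rw [tauSol_eq_det, det_diagonal_add_mul_diagonal, ← zeroIndices_bijective.sum_comp]
  simp only [exp_phaseI]

lemma FSol_eq_sum :
    FSol K p q ξ η x y k =
      ∑ I : Fin N → Fin 2, Real.exp (phaseI p q I x y k) •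
        -(ξ * diagonal (q - p) *
          principalAdjugate (omegaCoeff K p q ξ η) (zeroIndices I) * η) := by
  rw [FSol_eq_mul_adjugate, diagonal_mul_adjugate_diagonal_add_mul_diagonal,
    ← zeroIndices_bijective.sum_comp]
  simp only [exp_phaseI, Matrix.mul_sum, Matrix.sum_mul, Matrix.mul_smul, Matrix.smul_mul,
    smul_neg, Finset.sum_neg_distrib]

end Soliton

/-- `τ` and `F` of the pure `N`-soliton solution have expansions
`τ = Σ_I μ_I e^{ϑ_I}` and `F = Σ_I M_I e^{ϑ_I}` with constant coefficients,
`μ_𝟐 = 1` and `M_𝟐 = 0`. -/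
theorem tau_F_expansion
    (m n N : ℕ) (hm : 0 < m) (hn : 0 < n) (hN : 0 < N)
    (K : Matrix (Fin n) (Fin m) ℝ)
    (p q : Fin N → ℝ) (hp : ∀ i, 0 < p i) (hq : ∀ i, 0 < q i)
    (hpq : ∀ i j, p j ≠ q i)
    (ξ : Matrix (Fin m) (Fin N) ℝ) (η : Matrix (Fin N) (Fin n) ℝ) :
    ∃ (μ : (Fin N → Fin 2) → ℝ) (M : (Fin N → Fin 2) → Matrix (Fin m) (Fin n) ℝ),
      μ (fun _ => 1) = 1 ∧ M (fun _ => 1) = 0 ∧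
      ∀ (x y : ℝ) (k : ℤ),
        tauSol K p q ξ η x y k
          = ∑ I : Fin N → Fin 2, μ I * Real.exp (phaseI p q I x y k) ∧
        FSol K p q ξ η x y k
          = ∑ I : Fin N → Fin 2, Real.exp (phaseI p q I x y k) • M I := by
  refine ⟨fun I => principalMinor (omegaCoeff K p q ξ η) (zeroIndices I),
    fun I => -(ξ * diagonal (q - p) *
      principalAdjugate (omegaCoeff K p q ξ η) (zeroIndices I) * η), ?_, ?_,
    fun x y k => ⟨tauSol_eq_sum K p q ξ η x y k, FSol_eq_sum K p q ξ η x y k⟩⟩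
  · simp [zeroIndices_const_one]
  · simp [zeroIndices_const_one]
end

section
/- Let f : ℝ² × ℤ → ℝ be a twice continuously differentiable (in x, y) solution of the scalar potential two-dimensional Toda lattice equation f_{xy} − f⁺ + 2f − f⁻ = (f⁺ − f) f_y − f_y (f − f⁻), and let P be a constant m×n real matrix satisfying P K P = P, where K is a constant n×m real matrix. Then φ := f·P is a solution of the p2DTL_K equation φ_{xy} − φ⁺ + 2φ − φ⁻ = (φ⁺ − φ) K φ_y − φ_y K (φ − φ⁻). -/
open Matrix

/-- Partial derivative in `x` of a scalar function on `ℝ² × ℤ`. -/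
noncomputable def sdX (f : ℝ → ℝ → ℤ → ℝ) (x y : ℝ) (k : ℤ) : ℝ :=
  deriv (fun s => f s y k) x

/-- Partial derivative in `y` of a scalar function on `ℝ² × ℤ`. -/
noncomputable def sdY (f : ℝ → ℝ → ℤ → ℝ) (x y : ℝ) (k : ℤ) : ℝ :=
  deriv (fun s => f x s k) y

/-- The scalar potential two-dimensional Toda lattice equation
`f_{xy} − f⁺ + 2f − f⁻ = (f⁺ − f) f_y − f_y (f − f⁻)`. -/
def IsScalarP2DTL (f : ℝ → ℝ → ℤ → ℝ) : Prop :=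
  ∀ (x y : ℝ) (k : ℤ),
    sdY (sdX f) x y k - f x y (k + 1) + 2 * f x y k - f x y (k - 1)
      = (f x y (k + 1) - f x y k) * sdY f x y k
        - sdY f x y k * (f x y k - f x y (k - 1))

/-!
Since `P * K * P = P`, the map `c ↦ c • P` sends products of scalars to the products
`(X, Y) ↦ X * K * Y` of matrices, and as `P` is constant it commutes with both partial derivatives.
It therefore carries the scalar equation to the matrix equation term by term.
-/

theorem smul_mul_mul_smul {R α l m n o : Type*} [Fintype m] [Fintype n] [Monoid R]
    [NonUnitalNonAssocSemiring α] [DistribMulAction R α] [IsScalarTower R α α]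
    [SMulCommClass R α α]
    (c d : R) (A : Matrix l m α) (B : Matrix m n α) (C : Matrix n o α) :
    (c • A) * B * (d • C) = (c * d) • (A * B * C) := by
  rw [Matrix.smul_mul, Matrix.smul_mul, Matrix.mul_smul, smul_smul]

section PartialDerivatives

variable {a b : Type*} (f : ℝ → ℝ → ℤ → ℝ) (P : Matrix a b ℝ)

theorem pdX_smul_const :
    pdX (fun x y k => f x y k • P) = fun x y k => sdX f x y k • P := by
  ext x y k i j
  exact deriv_mul_const_field (P i j)

theorem pdY_smul_const :
    pdY (fun x y k => f x y k • P) = fun x y k => sdY f x y k • P := by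
  ext x y k i j
  exact deriv_mul_const_field (P i j)

end PartialDerivatives

theorem scalar_solution_times_projection_general {m n : ℕ}
    {K : Matrix (Fin n) (Fin m) ℝ} {P : Matrix (Fin m) (Fin n) ℝ} (hP : P * K * P = P)
    {f : ℝ → ℝ → ℤ → ℝ} (hf : IsScalarP2DTL f) :
    IsP2DTL K (fun x y k => f x y k • P) := by
  intro x y k
  rw [pdX_smul_const, pdY_smul_const, pdY_smul_const]
  calc
    sdY (sdX f) x y k • P - f x y (k + 1) • P + 2 • f x y k • P - f x y (k - 1) • P
      = (sdY (sdX f) x y k - f x y (k + 1) + 2 * f x y k - f x y (k - 1)) • P := by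
        module
    _ = ((f x y (k + 1) - f x y k) * sdY f x y k
          - sdY f x y k * (f x y k - f x y (k - 1))) • P := by
        rw [hf x y k]
    _ = (f x y (k + 1) • P - f x y k • P) * K * (sdY f x y k • P)
          - (sdY f x y k • P) * K * (f x y k • P - f x y (k - 1) • P) := by
        simp only [← sub_smul, smul_mul_mul_smul, hP]

/-- multiplying a scalar solution of the potential 2DTL equation by a constant
`K`-projection matrix `P` yields a solution of the matrix p2DTL_K equation. -/
theorem scalar_solution_times_projection
    (m n : ℕ) (hm : 0 < m) (hn : 0 < n)
    (K : Matrix (Fin n) (Fin m) ℝ)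
    (P : Matrix (Fin m) (Fin n) ℝ) (hP : P * K * P = P)
    (f : ℝ → ℝ → ℤ → ℝ)
    (hsmooth : ∀ k : ℤ, ContDiff ℝ 2 (fun pt : ℝ × ℝ => f pt.1 pt.2 k))
    (hf : IsScalarP2DTL f) :
    IsP2DTL K (fun x y k => f x y k • P) :=
  scalar_solution_times_projection_general hP hf
end
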